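/- Suppose M is consistent, contractive with contraction rate 0 < a < 1, uniformly continuous with b < ∞, and has a dominating Markov chain with c < ∞. Then P(M) is nonempty, i.e. M possesses an invariant Borel probability measure. -/

import Mathlib

open MeasureTheory Filter Topology
open scoped ENNReal NNReal Classical

noncomputable section

/-- A countable Markov system `(K_{i(e)}, w_e, p_e)_{e ∈ E}` on a metric space `K`:
a partition `(K_j)_{j ∈ N}` of `K` into nonempty Borel sets, source and target maps
`i, t : E → N` (`i` surjective), and for each `e ∈ E` Borel maps `w_e` and probability
functions `p_e` (extended by zero outside `K_{i(e)}`) with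
`∑_{e, i(e)=j} p_e(y) = 1` for `y ∈ K_j`. -/
structure MarkovSystem (K : Type*) [MetricSpace K] [MeasurableSpace K]
    (N : Type*) (E : Type*) where
  Kset : N → Set K
  Kset_nonempty : ∀ j, (Kset j).Nonempty
  Kset_measurable : ∀ j, MeasurableSet (Kset j)
  Kset_disjoint : Pairwise (Function.onFun Disjoint Kset)
  Kset_cover : (⋃ j, Kset j) = Set.univ
  i : E → N
  t : E → N
  i_surj : Function.Surjective i
  w : E → K → K
  p : E → K → ℝ
  w_measurable : ∀ e, Measurable (w e)
  p_measurable : ∀ e, Measurable (p e)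
  p_nonneg : ∀ e x, 0 ≤ p e x
  p_le_one : ∀ e x, p e x ≤ 1
  p_zero_outside : ∀ e x, x ∉ Kset (i e) → p e x = 0
  w_mapsTo : ∀ e, Set.MapsTo (w e) (Kset (i e)) (Kset (t e))
  p_pos_somewhere : ∀ e, ∃ x ∈ Kset (i e), 0 < p e x
  p_tsum_one : ∀ j, ∀ x ∈ Kset j, (∑' e : {e : E // i e = j}, p e.val x) = 1

/-- `Ē = E ∪ {∞}` (one-point compactification); with `E` countable its Borel σ-algebra
consists of all subsets. -/
instance optionMeasurableSpace (E : Type*) : MeasurableSpace (Option E) := ⊤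

/-- The code space `Σ̄ = Ē^ℤ`, carrying the product σ-algebra. -/
abbrev CodeSpace (E : Type*) : Type _ := ℤ → Option E

/-- The left shift `S` on the code space, `(Sσ)_{k-1} = σ_k`. -/
def shiftMap (E : Type*) : CodeSpace E → CodeSpace E := fun σ k => σ (k + 1)

/-- The cylinder set `_m[es₀, …, es_{n}] = {σ : σ_{m+k} = es_k}`. -/
def cylSetL {E : Type*} (m : ℤ) (es : List (Option E)) : Set (CodeSpace E) :=
  {σ | ∀ (k : ℕ) (h : k < es.length), σ (m + (k : ℤ)) = es.get ⟨k, h⟩}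

/-- The σ-algebra `𝓕` generated by the cylinder sets `_m[e_m, …, e_0]`, `m ≤ 0`. -/
def pastAlgebra (E : Type*) : MeasurableSpace (CodeSpace E) :=
  MeasurableSpace.generateFrom
    {A | ∃ es : List (Option E), es ≠ [] ∧ A = cylSetL (1 - (es.length : ℤ)) es}

/-- The conditional entropy `h_S(Λ) = H_Λ((_1[e])_{e ∈ Ē} | 𝓕)`. -/
def entropyS {E : Type*} (Λ : Measure (CodeSpace E)) : ℝ≥0∞ :=
  ∑' eo : Option E,
    ∫⁻ σ, ENNReal.ofReal
        (Real.negMulLog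
          ((Λ[Set.indicator {τ : CodeSpace E | τ 1 = eo} (fun _ => (1 : ℝ)) | pastAlgebra E]) σ)) ∂Λ

namespace MarkovSystem

variable {K : Type*} [MetricSpace K] [MeasurableSpace K] {N E : Type*}

/-- The Markov operator `Uf = ∑_e p_e · (f ∘ w_e)` acting on nonnegative Borel functions. -/
def markovOp (M : MarkovSystem K N E) (f : K → ℝ≥0∞) : K → ℝ≥0∞ :=
  fun x => ∑' e : E, ENNReal.ofReal (M.p e x) * f (M.w e x)

/-- The adjoint operator `U*` acting on measures, `(U*ν)(B) = ∫ U(1_B) dν`. -/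
def adjOp (M : MarkovSystem K N E) (ν : Measure K) : Measure K :=
  Measure.sum fun e : E =>
    Measure.map (M.w e) (ν.withDensity fun x => ENNReal.ofReal (M.p e x))

/-- `μ ∈ P(M)`: `μ` is an invariant Borel probability measure, `U*μ = μ`. -/
def IsInvariantMeasure (M : MarkovSystem K N E) (μ : Measure K) : Prop :=
  IsProbabilityMeasure μ ∧ M.adjOp μ = μ

/-- The path space `Σ_G`: all coordinates lie in `E` and `i(σ_{n+1}) = t(σ_n)`. -/
def pathSpace (M : MarkovSystem K N E) : Set (CodeSpace E) :=
  {σ | ∀ n : ℤ, ∃ e e' : E, σ n = some e ∧ σ (n + 1) = some e' ∧ M.i e' = M.t e}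

/-- `T_j = {σ ∈ Σ_G : t(σ_0) = j}`. -/
def Tset (M : MarkovSystem K N E) (j : N) : Set (CodeSpace E) :=
  {σ | σ ∈ M.pathSpace ∧ ∃ e : E, σ 0 = some e ∧ M.t e = j}

/-- `w` extended to `Ē`, with `w_∞ = id`. -/
def wext (M : MarkovSystem K N E) : Option E → K → K := fun o => o.elim id M.w

/-- `p` extended to `Ē`, with `p_∞ = 0`. -/
def pext (M : MarkovSystem K N E) : Option E → K → ℝ := fun o => o.elim (fun _ => 0) M.p

/-- `i` extended to `Ē`, with `i(∞) = j₀`. -/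
def iext (M : MarkovSystem K N E) (j0 : N) : Option E → N := fun o => o.elim j0 M.i

/-- `t` extended to `Ē`, with `t(∞) = j₀`. -/
def text (M : MarkovSystem K N E) (j0 : N) : Option E → N := fun o => o.elim j0 M.t

/-- `iterW M σ n y = w_{σ_0} ∘ w_{σ_{-1}} ∘ ⋯ ∘ w_{σ_{-n}} (y)`. -/
def iterW (M : MarkovSystem K N E) (σ : CodeSpace E) : ℕ → K → K
  | 0, y => M.wext (σ 0) y
  | n + 1, y => M.iterW σ n (M.wext (σ (-(n + 1 : ℤ))) y)

/-- `orbit M j0 xp σ n = w_{σ_0} ∘ ⋯ ∘ w_{σ_{-n}} (x_{i(σ_{-n})})`. -/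
def orbit (M : MarkovSystem K N E) (j0 : N) (xp : N → K) (σ : CodeSpace E) (n : ℕ) : K :=
  M.iterW σ n (xp (M.iext j0 (σ (-(n : ℤ)))))

/-- `D`: the set of `σ ∈ Σ_G` for which `lim_{m → -∞} w_{σ_0} ∘ ⋯ ∘ w_{σ_m}(x_{i(σ_m)})` exists. -/
def codeDomain (M : MarkovSystem K N E) (j0 : N) (xp : N → K) : Set (CodeSpace E) :=
  {σ | σ ∈ M.pathSpace ∧ ∃ l : K, Tendsto (fun n : ℕ => M.orbit j0 xp σ n) atTop (𝓝 l)}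

/-- The coding map `F`: the above limit on `D`, and `x_{t(σ_0)}` elsewhere. -/
def code (M : MarkovSystem K N E) (j0 : N) (xp : N → K) (σ : CodeSpace E) : K :=
  if h : σ ∈ M.codeDomain j0 xp then h.2.choose else xp (M.text j0 (σ 0))

/-- `Λ ∈ E(M)`: `Λ` is a shift-invariant Borel probability measure with `Λ(D) = 1` and
`E_Λ(1_{_1[e]} | 𝓕) = p_e ∘ F` `Λ`-a.e. for every `e ∈ E` (an equilibrium state). -/
def IsEquilibrium (M : MarkovSystem K N E) (j0 : N) (xp : N → K)
    (Λ : Measure (CodeSpace E)) : Prop :=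
  IsProbabilityMeasure Λ ∧ Measure.map (shiftMap E) Λ = Λ ∧
    Λ (M.codeDomain j0 xp) = 1 ∧
    ∀ e : E,
      (Λ[Set.indicator {σ : CodeSpace E | σ 1 = some e} (fun _ => (1 : ℝ)) | pastAlgebra E])
        =ᵐ[Λ] fun σ => M.p e (M.code j0 xp σ)

/-- `pbar` is the family of continuous extensions `p̄_e` of `p_e|_{K_{i(e)}}` to the closure
of `K_{i(e)}`, extended further by zero on `K`. -/
def IsUCExtensionP (M : MarkovSystem K N E) (pbar : E → K → ℝ) : Prop :=
  ∀ e : E, ContinuousOn (pbar e) (closure (M.Kset (M.i e))) ∧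
    (∀ x ∈ M.Kset (M.i e), pbar e x = M.p e x) ∧
    (∀ x, x ∉ closure (M.Kset (M.i e)) → pbar e x = 0)

/-- `wb` is a family of continuous extensions `w̄_e` of `w_e|_{K_{i(e)}}` to the closure
of `K_{i(e)}`. -/
def IsUCExtensionW (M : MarkovSystem K N E) (wb : E → K → K) : Prop :=
  ∀ e : E, ContinuousOn (wb e) (closure (M.Kset (M.i e))) ∧
    (∀ x ∈ M.Kset (M.i e), wb e x = M.w e x)

/-- The Markov system is uniformly continuous: each `w_e|_{K_{i(e)}}` and `p_e|_{K_{i(e)}}`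
is uniformly continuous. -/
def IsUniformlyContinuous (M : MarkovSystem K N E) : Prop :=
  ∀ e : E, UniformContinuousOn (M.w e) (M.Kset (M.i e)) ∧
    UniformContinuousOn (M.p e) (M.Kset (M.i e))

/-- `∂p_e = p̄_e · 1_{cl(K_{i(e)}) \ K_{i(e)}}`. -/
def dp (M : MarkovSystem K N E) (pbar : E → K → ℝ) (e : E) : K → ℝ :=
  Set.indicator (closure (M.Kset (M.i e)) \ M.Kset (M.i e)) (pbar e)

/-- `Λ ∈ Ẽ(M)` (asymptotic state): shift-invariant probability with `Λ(D) = 1` and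
`E_Λ(1_{_1[e]} | 𝓕) = (p̄_e ∘ F)·1_{T_{i(e)}}` `Λ`-a.e. for every `e`. -/
def IsAsymptotic (M : MarkovSystem K N E) (j0 : N) (xp : N → K) (pbar : E → K → ℝ)
    (Λ : Measure (CodeSpace E)) : Prop :=
  IsProbabilityMeasure Λ ∧ Measure.map (shiftMap E) Λ = Λ ∧
    Λ (M.codeDomain j0 xp) = 1 ∧
    ∀ e : E,
      (Λ[Set.indicator {σ : CodeSpace E | σ 1 = some e} (fun _ => (1 : ℝ)) | pastAlgebra E])
        =ᵐ[Λ] Set.indicator (M.Tset (M.i e)) (fun σ => pbar e (M.code j0 xp σ))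

/-- `Λ ∈ E_⊥(M)`: shift-invariant probability with `Λ(D) = 1` and
`E_Λ(1_{_1[e]} | 𝓕) = (∂p_e ∘ F)·1_{T_{i(e)}}` `Λ`-a.e. for every `e`. -/
def IsPerp (M : MarkovSystem K N E) (j0 : N) (xp : N → K) (pbar : E → K → ℝ)
    (Λ : Measure (CodeSpace E)) : Prop :=
  IsProbabilityMeasure Λ ∧ Measure.map (shiftMap E) Λ = Λ ∧
    Λ (M.codeDomain j0 xp) = 1 ∧
    ∀ e : E,
      (Λ[Set.indicator {σ : CodeSpace E | σ 1 = some e} (fun _ => (1 : ℝ)) | pastAlgebra E])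
        =ᵐ[Λ] Set.indicator (M.Tset (M.i e)) (fun σ => M.dp pbar e (M.code j0 xp σ))

/-- `G = ⋃_{k ≥ 0} ⋃_{j ∈ N} S^{-k}(F^{-1}(K_j) ∩ T_j)`. -/
def Gset (M : MarkovSystem K N E) (j0 : N) (xp : N → K) : Set (CodeSpace E) :=
  ⋃ (k : ℕ) (j : N), (shiftMap E)^[k] ⁻¹' ((M.code j0 xp) ⁻¹' (M.Kset j) ∩ M.Tset j)

/-- `M` is non-degenerate: for every asymptotic state `Λ` there is `i ∈ N` with
`Λ(T_i ∩ F^{-1}(K_i)) > 0`. -/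
def IsNonDegenerate (M : MarkovSystem K N E) (j0 : N) (xp : N → K) (pbar : E → K → ℝ) : Prop :=
  ∀ Λ : Measure (CodeSpace E), M.IsAsymptotic j0 xp pbar Λ →
    ∃ i : N, 0 < Λ (M.Tset i ∩ (M.code j0 xp) ⁻¹' (M.Kset i))

/-- `M` is consistent: `F(Λ) ∈ P(M)` for every asymptotic state `Λ`. -/
def IsConsistent (M : MarkovSystem K N E) (j0 : N) (xp : N → K) (pbar : E → K → ℝ) : Prop :=
  ∀ Λ : Measure (CodeSpace E), M.IsAsymptotic j0 xp pbar Λ →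
    M.IsInvariantMeasure (Measure.map (M.code j0 xp) Λ)

/-- `Rf = ∑_e ∂p_e · (f ∘ w̄_e)`. -/
def Rop (M : MarkovSystem K N E) (pbar : E → K → ℝ) (wb : E → K → K)
    (f : K → ℝ≥0∞) : K → ℝ≥0∞ :=
  fun x => ∑' e : E, ENNReal.ofReal (M.dp pbar e x) * f (wb e x)

/-- `Ω = ⋂_{n ≥ 1} {R^n 1 ≥ 1}`. -/
def OmegaSet (M : MarkovSystem K N E) (pbar : E → K → ℝ) (wb : E → K → K) : Set K :=
  ⋂ n : ℕ, {x : K | 1 ≤ (M.Rop pbar wb)^[n + 1] (fun _ => 1) x}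

/-- `ξ_j = ∑_{e, i(e) = j} sup_{x ∈ K_j} p_e(x)`. -/
def xi (M : MarkovSystem K N E) (j : N) : ℝ≥0∞ :=
  ∑' e : {e : E // M.i e = j}, ⨆ x ∈ M.Kset j, ENNReal.ofReal (M.p e.val x)

/-- `M` has a dominating Markov chain: `ξ_j < ∞` for all `j ∈ N`. -/
def HasDominatingChain (M : MarkovSystem K N E) : Prop := ∀ j : N, M.xi j ≠ ⊤

/-- `ξ_j · q_{j j'} = ∑_{e, i(e) = j, t(e) = j'} sup_{x ∈ K_j} p_e(x)`. -/
def xiq (M : MarkovSystem K N E) (j j' : N) : ℝ≥0∞ :=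
  ∑' e : {e : E // M.i e = j ∧ M.t e = j'}, ⨆ x ∈ M.Kset j, ENNReal.ofReal (M.p e.val x)

/-- `c = ∑_{j'} sup_j ξ_j q_{j j'}`. -/
def cConst (M : MarkovSystem K N E) : ℝ≥0∞ := ∑' j' : N, ⨆ j : N, M.xiq j j'

/-- `α^{x_0}_n({j}) = (1/n) ∑_{k=1}^n ((U*)^k δ_{x_0})(K_j)`. -/
def alphaMeas (M : MarkovSystem K N E) (x0 : K) (n : ℕ) (j : N) : ℝ≥0∞ :=
  (n : ℝ≥0∞)⁻¹ * ∑ k ∈ Finset.range n, (M.adjOp^[k + 1] (Measure.dirac x0)) (M.Kset j)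

/-- Condition (T) at `x_0`: the sequence `(α^{x_0}_n)_n` is uniformly tight. -/
def ConditionT (M : MarkovSystem K N E) (x0 : K) : Prop :=
  ∀ ε : ℝ, 0 < ε → ∃ V : Finset N,
    ∀ n : ℕ, (∑' j : {j : N // j ∉ V}, M.alphaMeas x0 (n + 1) j.val) < ENNReal.ofReal ε

/-- `M` is contractive with contraction rate `a`:
`∑_{e, i(e) = j} p_e(x) d(w_e x, w_e y) ≤ a·d(x, y)` on each `K_j`. -/
def IsContractive (M : MarkovSystem K N E) (a : ℝ) : Prop :=
  ∀ j : N, ∀ x ∈ M.Kset j, ∀ y ∈ M.Kset j,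
    (∑' e : {e : E // M.i e = j},
        ENNReal.ofReal (M.p e.val x * dist (M.w e.val x) (M.w e.val y)))
      ≤ ENNReal.ofReal (a * dist x y)

/-- `L(x) = ∑_j d(x, x_j)·1_{K_j}(x)`. -/
def Lfun (M : MarkovSystem K N E) (xp : N → K) : K → ℝ≥0∞ :=
  fun x => ∑' j : N, Set.indicator (M.Kset j) (fun y => ENNReal.ofReal (dist y (xp j))) x

/-- `b = sup_j sup_{x ∈ K_j} ∑_{e, i(e) = j} p_e(x)·d(w_e(x_{i(e)}), x_{t(e)})`. -/
def bConst (M : MarkovSystem K N E) (xp : N → K) : ℝ≥0∞ :=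
  ⨆ j : N, ⨆ x ∈ M.Kset j,
    ∑' e : {e : E // M.i e = j},
      ENNReal.ofReal (M.p e.val x * dist (M.w e.val (xp (M.i e.val))) (xp (M.t e.val)))

/-- `P^m_x` evaluated on a word: `p_{e_0}(x)·p_{e_1}(w_{e_0}x)·⋯`. -/
def wordProb (M : MarkovSystem K N E) : List (Option E) → K → ℝ
  | [], _ => 1
  | o :: rest, x => M.pext o x * M.wordProb rest (M.wext o x)

/-- `Λ = Φ(μ)`: `Λ` is a shift-invariant Borel probability measure with
`Λ(_m[e_m, …, e_n]) = ∫ P^m_x(_m[e_m, …, e_n]) dμ(x)` for all cylinders with `m ≤ 0`. -/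
def IsPhiOf (M : MarkovSystem K N E) (μ : Measure K) (Λ : Measure (CodeSpace E)) : Prop :=
  IsProbabilityMeasure Λ ∧ Measure.map (shiftMap E) Λ = Λ ∧
    ∀ m : ℤ, m ≤ 0 → ∀ es : List (Option E),
      Λ (cylSetL m es) = ∫⁻ x, ENNReal.ofReal (M.wordProb es x) ∂μ

/-- The (negative of the) energy function: `-u(σ) = -log p_{σ_1}(F(σ))` on `D`
(`+∞` if `p_{σ_1}(F(σ)) = 0`) and `+∞` off `D`, valued in `[0, ∞]`. -/
def negEnergy (M : MarkovSystem K N E) (j0 : N) (xp : N → K) (σ : CodeSpace E) : ℝ≥0∞ :=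
  if σ ∈ M.codeDomain j0 xp then
    (σ 1).elim ⊤ fun e =>
      if M.p e (M.code j0 xp σ) = 0 then ⊤
      else ENNReal.ofReal (-Real.log (M.p e (M.code j0 xp σ)))
  else ⊤

/-- The free energy `h_S(Λ) + ∫ u dΛ`, as an extended real number. -/
def freeEnergy (M : MarkovSystem K N E) (j0 : N) (xp : N → K)
    (Λ : Measure (CodeSpace E)) : EReal :=
  (entropyS Λ : EReal) - ((∫⁻ σ, M.negEnergy j0 xp σ ∂Λ : ℝ≥0∞) : EReal)

/-- `Λ₀ ∈ E(u)`: `Λ₀` is a thermodynamic equilibrium state for the energy function `u`. -/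
def IsEquilibriumForU (M : MarkovSystem K N E) (j0 : N) (xp : N → K)
    (Λ0 : Measure (CodeSpace E)) : Prop :=
  IsProbabilityMeasure Λ0 ∧ Measure.map (shiftMap E) Λ0 = Λ0 ∧ entropyS Λ0 ≠ ⊤ ∧
    M.freeEnergy j0 xp Λ0 =
      sSup {r : EReal | ∃ Λ : Measure (CodeSpace E),
        IsProbabilityMeasure Λ ∧ Measure.map (shiftMap E) Λ = Λ ∧ entropyS Λ ≠ ⊤ ∧
          r = M.freeEnergy j0 xp Λ}

end MarkovSystem

end

noncomputable section

namespace MarkovSystem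

/-- Histories are finite words in `E`, newest letter first; all sets of words are measurable. -/
instance listMeasurableSpace (E : Type*) : MeasurableSpace (List E) := ⊤

section PathLaw

variable {K : Type*} [MetricSpace K] [MeasurableSpace K] {N E : Type*}

/-- The index of the partition element containing `x`. -/
def idx (M : MarkovSystem K N E) (x : K) : N :=
  (Set.mem_iUnion.1 (M.Kset_cover.symm ▸ Set.mem_univ x : x ∈ ⋃ j, M.Kset j)).choose

lemma mem_idx (M : MarkovSystem K N E) (x : K) : x ∈ M.Kset (M.idx x) :=
  (Set.mem_iUnion.1 (M.Kset_cover.symm ▸ Set.mem_univ x : x ∈ ⋃ j, M.Kset j)).choose_spec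

lemma eq_of_mem (M : MarkovSystem K N E) {x : K} {j j' : N} (h : x ∈ M.Kset j)
    (h' : x ∈ M.Kset j') : j = j' := by
  by_contra hne
  exact Set.disjoint_left.1 (M.Kset_disjoint hne) h h'

lemma idx_eq (M : MarkovSystem K N E) {x : K} {j : N} (h : x ∈ M.Kset j) : M.idx x = j :=
  M.eq_of_mem (M.mem_idx x) h

lemma mem_of_p_ne_zero (M : MarkovSystem K N E) {e : E} {x : K} (h : M.p e x ≠ 0) :
    x ∈ M.Kset (M.i e) := by
  by_contra hx
  exact h (M.p_zero_outside e x hx)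

/-- One-step averages are sums over the edges leaving the current vertex. -/
lemma tsum_p_mul (M : MarkovSystem K N E) {x : K} {j : N} (hx : x ∈ M.Kset j) (g : E → ℝ≥0∞) :
    ∑' e, ENNReal.ofReal (M.p e x) * g e =
      ∑' e : {e : E // M.i e = j}, ENNReal.ofReal (M.p e.val x) * g e.val := by
  refine (tsum_subtype_eq_of_support_subset (s := {e | M.i e = j}) ?_).symm
  intro e he
  refine M.eq_of_mem (M.mem_of_p_ne_zero (x := x) fun h0 => he ?_) hx
  simp [h0]

lemma tsum_p (M : MarkovSystem K N E) (x : K) : ∑' e, ENNReal.ofReal (M.p e x) = 1 := by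
  have h1 := M.p_tsum_one _ x (M.mem_idx x)
  have h := M.tsum_p_mul (M.mem_idx x) fun _ => 1
  simp only [mul_one] at h
  rw [h, ← ENNReal.ofReal_tsum_of_nonneg (fun e => M.p_nonneg _ _), h1, ENNReal.ofReal_one]
  by_contra hs
  rw [tsum_eq_zero_of_not_summable hs] at h1
  exact zero_ne_one h1

/-- The position reached from `x0` along a history. -/
def pos (M : MarkovSystem K N E) (x0 : K) : List E → K
  | [] => x0
  | e :: h => M.w e (pos M x0 h)

/-- One step of the process: append a letter with probability `p_e` at the current position. -/
def stepLaw (M : MarkovSystem K N E) (x0 : K) (h : List E) : Measure (List E) :=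
  Measure.sum fun e : E => ENNReal.ofReal (M.p e (M.pos x0 h)) • Measure.dirac (e :: h)

/-- The law of the history after `n` steps started at `x0`. -/
def pathLaw (M : MarkovSystem K N E) (x0 : K) : ℕ → Measure (List E)
  | 0 => Measure.dirac []
  | n + 1 => (pathLaw M x0 n).bind (M.stepLaw x0)

lemma lintegral_stepLaw (M : MarkovSystem K N E) (x0 : K) (h : List E) (f : List E → ℝ≥0∞) :
    ∫⁻ l, f l ∂(M.stepLaw x0 h) = ∑' e, ENNReal.ofReal (M.p e (M.pos x0 h)) * f (e :: h) := by
  rw [stepLaw, lintegral_sum_measure]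
  congr 1
  ext e
  rw [lintegral_smul_measure, lintegral_dirac' _ measurable_from_top, smul_eq_mul]

lemma lintegral_pathLaw_succ (M : MarkovSystem K N E) (x0 : K) (n : ℕ) (f : List E → ℝ≥0∞) :
    ∫⁻ l, f l ∂(M.pathLaw x0 (n + 1)) =
      ∫⁻ h, ∑' e, ENNReal.ofReal (M.p e (M.pos x0 h)) * f (e :: h) ∂(M.pathLaw x0 n) := by
  rw [pathLaw, Measure.lintegral_bind measurable_from_top.aemeasurable
    measurable_from_top.aemeasurable]
  simp_rw [lintegral_stepLaw]

instance isProbabilityMeasure_pathLaw (M : MarkovSystem K N E) (x0 : K) (n : ℕ) :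
    IsProbabilityMeasure (M.pathLaw x0 n) := by
  induction n with
  | zero => rw [pathLaw]; infer_instance
  | succ n ih =>
    constructor
    have h := M.lintegral_pathLaw_succ x0 n fun _ => 1
    simpa [tsum_p] using h

/-- Histories along which each letter starts at the vertex of the current position. -/
def Valid (M : MarkovSystem K N E) (x0 : K) : List E → Prop
  | [] => True
  | e :: h => M.pos x0 h ∈ M.Kset (M.i e) ∧ Valid M x0 h

lemma ae_pathLaw_succ (M : MarkovSystem K N E) (x0 : K) (n : ℕ) {P : List E → Prop}
    (h : ∀ᵐ h ∂(M.pathLaw x0 n), ∀ e, M.pos x0 h ∈ M.Kset (M.i e) → P (e :: h)) :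
    ∀ᵐ l ∂(M.pathLaw x0 (n + 1)), P l := by
  have key := M.lintegral_pathLaw_succ x0 n (Set.indicator {l | ¬ P l} 1)
  rw [lintegral_indicator_one MeasurableSpace.measurableSet_top] at key
  rw [ae_iff, key, lintegral_eq_zero_iff measurable_from_top]
  filter_upwards [h] with l hl
  simp only [Pi.zero_apply, ENNReal.tsum_eq_zero, mul_eq_zero, Set.indicator_apply_eq_zero]
  intro e
  by_cases hp : M.p e (M.pos x0 l) = 0
  · simp [hp]
  · exact Or.inr fun hn => absurd (hl e (M.mem_of_p_ne_zero hp)) hn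

lemma ae_valid (M : MarkovSystem K N E) (x0 : K) (n : ℕ) :
    ∀ᵐ h ∂(M.pathLaw x0 n), M.Valid x0 h ∧ h.length = n := by
  induction n with
  | zero =>
    rw [pathLaw, ae_dirac_iff MeasurableSpace.measurableSet_top]
    exact ⟨trivial, rfl⟩
  | succ n ih =>
    refine M.ae_pathLaw_succ x0 n ?_
    filter_upwards [ih] with h hh e he
    exact ⟨⟨he, hh.1⟩, by simp [hh.2]⟩

lemma lintegral_pathLaw_tail (M : MarkovSystem K N E) (x0 : K) (n : ℕ) (f : List E → ℝ≥0∞) :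
    ∫⁻ l, f l.tail ∂(M.pathLaw x0 (n + 1)) = ∫⁻ h, f h ∂(M.pathLaw x0 n) := by
  rw [lintegral_pathLaw_succ]
  simp [ENNReal.tsum_mul_right, tsum_p]

lemma lintegral_pathLaw_drop (M : MarkovSystem K N E) (x0 : K) (n k : ℕ) (f : List E → ℝ≥0∞) :
    ∫⁻ l, f (l.drop k) ∂(M.pathLaw x0 (n + k)) = ∫⁻ h, f h ∂(M.pathLaw x0 n) := by
  induction k generalizing f with
  | zero => simp
  | succ k ih =>
    rw [← ih f, ← M.lintegral_pathLaw_tail x0 (n + k) fun l => f (l.drop k), ← add_assoc]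
    simp [List.drop_tail]

/-- The approximate coding map: iterate the last `m` letters of the history, starting at the
reference point of the vertex reached `m` steps ago. -/
def approx (M : MarkovSystem K N E) (xp : N → K) (x0 : K) : ℕ → List E → K
  | 0, h => xp (M.idx (M.pos x0 h))
  | _ + 1, [] => x0
  | m + 1, e :: h => M.w e (approx M xp x0 m h)

lemma pos_mem_of_valid_cons (M : MarkovSystem K N E) {x0 : K} {e : E} {h : List E}
    (hv : M.Valid x0 (e :: h)) : M.pos x0 (e :: h) ∈ M.Kset (M.t e) :=
  M.w_mapsTo e hv.1

lemma approx_mem (M : MarkovSystem K N E) {xp : N → K} (hxp : ∀ j, xp j ∈ M.Kset j) (x0 : K)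
    (m : ℕ) (h : List E) (hv : M.Valid x0 h) :
    M.approx xp x0 m h ∈ M.Kset (M.idx (M.pos x0 h)) := by
  induction m generalizing h with
  | zero => exact hxp _
  | succ m ih =>
    cases h with
    | nil => exact M.mem_idx _
    | cons e h =>
      rw [M.idx_eq (M.pos_mem_of_valid_cons hv)]
      refine M.w_mapsTo e ?_
      rw [← M.idx_eq hv.1]
      exact ih h hv.2

lemma tsum_p_dist_le (M : MarkovSystem K N E) {a : ℝ} (hcon : M.IsContractive a) {j : N}
    {x y : K} (hx : x ∈ M.Kset j) (hy : y ∈ M.Kset j) (ha : 0 ≤ a) :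
    ∑' e, ENNReal.ofReal (M.p e x) * ENNReal.ofReal (dist (M.w e x) (M.w e y)) ≤
      ENNReal.ofReal a * ENNReal.ofReal (dist x y) := by
  rw [M.tsum_p_mul hx, ← ENNReal.ofReal_mul ha]
  refine le_trans (le_of_eq ?_) (hcon j x hx y hy)
  congr 1
  ext e
  rw [ENNReal.ofReal_mul (M.p_nonneg _ _)]

lemma lintegral_dist_ref_succ_le (M : MarkovSystem K N E) {xp : N → K}
    (hxp : ∀ j, xp j ∈ M.Kset j) (x0 : K) {a : ℝ} (ha : 0 ≤ a) (hcon : M.IsContractive a) (n : ℕ) :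
    ∫⁻ l, ENNReal.ofReal (dist (M.pos x0 l) (M.approx xp x0 0 l)) ∂(M.pathLaw x0 (n + 1)) ≤
      ENNReal.ofReal a *
        ∫⁻ l, ENNReal.ofReal (dist (M.pos x0 l) (M.approx xp x0 0 l)) ∂(M.pathLaw x0 n) +
      M.bConst xp := by
  rw [lintegral_pathLaw_succ, ← lintegral_const_mul _ measurable_from_top]
  calc _ ≤ ∫⁻ l, (ENNReal.ofReal a * ENNReal.ofReal (dist (M.pos x0 l) (M.approx xp x0 0 l)) +
        M.bConst xp) ∂(M.pathLaw x0 n) := by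
        refine lintegral_mono fun h => ?_
        set x := M.pos x0 h with hxdef
        set j := M.idx x
        have hx : x ∈ M.Kset j := M.mem_idx x
        refine le_trans ?_ (add_le_add (M.tsum_p_dist_le hcon hx (hxp j) ha)
          (le_iSup₂_of_le j x (le_iSup_of_le hx le_rfl)))
        have hb : ∑' e : {e : E // M.i e = j},
            ENNReal.ofReal (M.p e.val x * dist (M.w e.val (xp (M.i e.val))) (xp (M.t e.val))) =
            ∑' e, ENNReal.ofReal (M.p e x) *
              ENNReal.ofReal (dist (M.w e (xp (M.i e))) (xp (M.t e))) := by
          rw [M.tsum_p_mul hx]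
          congr 1
          ext e
          rw [ENNReal.ofReal_mul (M.p_nonneg _ _)]
        rw [hb, ← ENNReal.tsum_add]
        refine ENNReal.tsum_le_tsum fun e => ?_
        by_cases hp : M.p e x = 0
        · simp [hp]
        have he := M.mem_of_p_ne_zero hp
        have hje : M.i e = j := M.eq_of_mem he hx
        have ht : M.idx (M.w e x) = M.t e := M.idx_eq (M.w_mapsTo e he)
        rw [← mul_add, ← ENNReal.ofReal_add dist_nonneg dist_nonneg]
        gcongr
        simp only [pos, approx]
        rw [← hxdef, ht, hje]
        exact dist_triangle _ _ _
    _ = _ := by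
        rw [lintegral_add_right _ measurable_const, lintegral_const]
        simp

lemma lintegral_dist_ref_le (M : MarkovSystem K N E) {xp : N → K}
    (hxp : ∀ j, xp j ∈ M.Kset j) (j0 : N) {a : ℝ} (ha : 0 ≤ a) (hcon : M.IsContractive a)
    {C : ℝ≥0∞} (hC : ENNReal.ofReal a * C + M.bConst xp ≤ C) (n : ℕ) :
    ∫⁻ l, ENNReal.ofReal (dist (M.pos (xp j0) l) (M.approx xp (xp j0) 0 l))
      ∂(M.pathLaw (xp j0) n) ≤ C := by
  induction n with
  | zero =>
    rw [pathLaw, lintegral_dirac' _ measurable_from_top]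
    simp [pos, approx, M.idx_eq (hxp j0)]
  | succ n ih =>
    refine (M.lintegral_dist_ref_succ_le hxp _ ha hcon n).trans (le_trans ?_ hC)
    gcongr

/-- The approximate coding map converges exponentially fast, in mean, to the position. -/
lemma lintegral_dist_approx_le (M : MarkovSystem K N E) {xp : N → K}
    (hxp : ∀ j, xp j ∈ M.Kset j) (j0 : N) {a : ℝ} (ha : 0 ≤ a) (hcon : M.IsContractive a)
    {C : ℝ≥0∞} (hC : ENNReal.ofReal a * C + M.bConst xp ≤ C) (m n : ℕ) :
    ∫⁻ l, ENNReal.ofReal (dist (M.pos (xp j0) l) (M.approx xp (xp j0) m l))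
      ∂(M.pathLaw (xp j0) n) ≤ ENNReal.ofReal a ^ m * C := by
  induction m generalizing n with
  | zero => simpa using M.lintegral_dist_ref_le hxp j0 ha hcon hC n
  | succ m ih =>
    cases n with
    | zero =>
      rw [pathLaw, lintegral_dirac' _ measurable_from_top]
      simp [pos, approx]
    | succ n =>
      rw [lintegral_pathLaw_succ, pow_succ', mul_assoc]
      refine le_trans ?_ (mul_le_mul_right (ih n) _)
      rw [← lintegral_const_mul _ measurable_from_top]
      refine lintegral_mono_ae ?_
      filter_upwards [M.ae_valid (xp j0) n] with h hh
      exact M.tsum_p_dist_le hcon (M.mem_idx _) (M.approx_mem hxp _ _ _ hh.1) ha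

end PathLaw

section Tight

variable {K : Type*} [MetricSpace K] [MeasurableSpace K] {N E : Type*}

lemma lintegral_indicator_pos_succ_le (M : MarkovSystem K N E) (x0 : K) (n : ℕ) (j : N) :
    ∫⁻ l, (M.Kset j).indicator 1 (M.pos x0 l) ∂(M.pathLaw x0 (n + 1)) ≤ ⨆ j', M.xiq j' j := by
  rw [lintegral_pathLaw_succ]
  refine (lintegral_mono (g := fun _ => ⨆ j', M.xiq j' j) fun h => ?_).trans (by simp)
  set x := M.pos x0 h with hxdef
  have hx : x ∈ M.Kset (M.idx x) := M.mem_idx x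
  refine le_iSup_of_le (M.idx x) ?_
  refine le_trans ?_ (tsum_subtype {e | M.i e = M.idx x ∧ M.t e = j}
    fun e => ⨆ y ∈ M.Kset (M.idx x), ENNReal.ofReal (M.p e y)).ge
  refine ENNReal.tsum_le_tsum fun e => ?_
  by_cases hp : M.p e x = 0
  · simp [hp]
  have he := M.mem_of_p_ne_zero hp
  by_cases hw : M.w e x ∈ M.Kset j
  · rw [Set.indicator_of_mem (show e ∈ {e | M.i e = M.idx x ∧ M.t e = j} from
      ⟨M.eq_of_mem he hx, M.eq_of_mem (M.w_mapsTo e he) hw⟩)]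
    simp only [pos]
    rw [← hxdef, Set.indicator_of_mem hw, Pi.one_apply, mul_one]
    exact le_iSup₂_of_le x hx le_rfl
  · simp only [pos]
    rw [← hxdef, Set.indicator_of_notMem hw, mul_zero]
    exact zero_le

lemma exists_finset_vertex (M : MarkovSystem K N E) [Countable N] (hc : M.cConst ≠ ⊤)
    (x0 : K) {ε : ℝ≥0∞} (hε : 0 < ε) :
    ∃ J : Finset N, ∀ n, ∫⁻ l, ∑' j : {j // j ∉ J}, (M.Kset j.val).indicator 1 (M.pos x0 l)
      ∂(M.pathLaw x0 n) ≤ ε := by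
  have h := ENNReal.tendsto_tsum_compl_atTop_zero hc
  obtain ⟨J, hJ, hJ'⟩ := ((h.eventually_lt_const hε).and
    (eventually_ge_atTop {M.idx x0})).exists
  refine ⟨J, fun n => ?_⟩
  cases n with
  | zero =>
    rw [pathLaw, lintegral_dirac' _ measurable_from_top]
    refine le_trans (le_of_eq (ENNReal.tsum_eq_zero.2 fun j => ?_)) zero_le
    refine Set.indicator_of_notMem (fun hmem => j.2 ?_) _
    rw [← M.idx_eq hmem]
    exact hJ' (Finset.mem_singleton_self _)
  | succ n =>
    rw [lintegral_tsum fun _ => measurable_from_top.aemeasurable]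
    exact (ENNReal.tsum_le_tsum fun j : {j // j ∉ J} => M.lintegral_indicator_pos_succ_le x0 n j.val).trans hJ.le

lemma exists_finset_edge (M : MarkovSystem K N E) (hdom : M.HasDominatingChain) (J : Finset N)
    {ε : ℝ≥0∞} (hε : 0 < ε) :
    ∃ V : Finset E, ∀ j ∈ J, ∀ x ∈ M.Kset j,
      ∑' e : {e // e ∉ V}, ENNReal.ofReal (M.p e.val x) ≤ ε := by
  have key : ∀ j, ∀ᶠ V : Finset E in atTop, ∀ x ∈ M.Kset j,
      ∑' e : {e // e ∉ V}, ENNReal.ofReal (M.p e.val x) ≤ ε := by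
    intro j
    have hfin : ∑' e, Set.indicator {e | M.i e = j}
        (fun e => ⨆ x ∈ M.Kset j, ENNReal.ofReal (M.p e x)) e ≠ ⊤ := by
      rw [← tsum_subtype]
      exact hdom j
    have h := ENNReal.tendsto_tsum_compl_atTop_zero hfin
    filter_upwards [h.eventually_lt_const hε] with V hV x hx
    refine (ENNReal.tsum_le_tsum fun e => ?_).trans hV.le
    by_cases hp : M.p e.val x = 0
    · simp [hp]
    rw [Set.indicator_of_mem (show e.val ∈ {e | M.i e = j} from
      M.eq_of_mem (M.mem_of_p_ne_zero hp) hx)]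
    exact le_iSup₂_of_le x hx le_rfl
  exact ((J.eventually_all).2 fun j _ => key j).exists

/-- The letters of the path are uniformly tight. -/
lemma exists_finset_head (M : MarkovSystem K N E) [Countable N] (hdom : M.HasDominatingChain)
    (hc : M.cConst ≠ ⊤) (x0 : K) {ε : ℝ≥0∞} (hε : 0 < ε) :
    ∃ V : Finset E, ∀ n, M.pathLaw x0 n {l | ∃ e ∉ V, l[0]? = some e} ≤ ε := by
  have hε2 : 0 < ε / 2 := ENNReal.half_pos hε.ne'
  obtain ⟨J, hJ⟩ := M.exists_finset_vertex hc x0 hε2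
  obtain ⟨V, hV⟩ := M.exists_finset_edge hdom J hε2
  refine ⟨V, fun n => ?_⟩
  rw [← lintegral_indicator_one MeasurableSpace.measurableSet_top]
  cases n with
  | zero =>
    rw [pathLaw, lintegral_dirac' _ measurable_from_top]
    simp
  | succ n =>
    rw [lintegral_pathLaw_succ]
    calc _ ≤ ∫⁻ l, (∑' j : {j // j ∉ J}, (M.Kset j.val).indicator 1 (M.pos x0 l) + ε / 2)
          ∂(M.pathLaw x0 n) := by
          refine lintegral_mono fun h => ?_
          have h1 : ∑' e, ENNReal.ofReal (M.p e (M.pos x0 h)) *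
              {l : List E | ∃ e ∉ V, l[0]? = some e}.indicator 1 (e :: h) =
              ∑' e : {e // e ∉ V}, ENNReal.ofReal (M.p e.val (M.pos x0 h)) := by
            refine Eq.trans ?_
              (tsum_subtype {e | e ∉ V} fun e => ENNReal.ofReal (M.p e (M.pos x0 h))).symm
            congr 1
            ext e
            by_cases he : e ∈ V <;> simp [he, Set.indicator]
          simp only
          rw [h1]
          by_cases hj : M.idx (M.pos x0 h) ∈ J
          · exact (hV _ hj _ (M.mem_idx _)).trans le_add_self
          · refine le_trans ?_ le_self_add
            refine le_trans ?_ (ENNReal.le_tsum ⟨M.idx (M.pos x0 h), hj⟩)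
            rw [Set.indicator_of_mem (M.mem_idx _), Pi.one_apply, ← M.tsum_p (M.pos x0 h)]
            exact ENNReal.tsum_comp_le_tsum_of_injective Subtype.val_injective _
      _ ≤ ε := by
          rw [lintegral_add_right _ measurable_const, lintegral_const]
          simp only [measure_univ, mul_one]
          exact (add_le_add_left (hJ n) _).trans (ENNReal.add_halves ε).le

end Tight

/-- The discrete topology on the extended alphabet. -/
local instance optionTopologicalSpace (E : Type*) : TopologicalSpace (Option E) := ⊥

local instance optionDiscreteTopology (E : Type*) : DiscreteTopology (Option E) := ⟨rfl⟩

local instance optionBorelSpace (E : Type*) : BorelSpace (Option E) :=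
  ⟨(borel_eq_top_of_discrete (α := Option E)).symm⟩

section Average

variable {K : Type*} [MetricSpace K] [MeasurableSpace K] {N E : Type*}

/-- The code with newest letter at time `k` read off from a finite history. -/
def embed (k : ℤ) (h : List E) : CodeSpace E :=
  fun j => if j ≤ k then h[(k - j).toNat]? else none

lemma embed_drop (k : ℕ) (h : List E) {j r : ℤ} (hj : j ≤ r) :
    embed (k + r) h j = embed r (h.drop k) j := by
  rw [embed, embed, if_pos (by omega), if_pos hj, List.getElem?_drop]
  congr 1
  omega

lemma embed_shift (k : ℤ) (h : List E) : shiftMap E (embed k h) = embed (k - 1) h := by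
  ext1 j
  simp only [shiftMap, embed]
  congr 1
  · simp only [eq_iff_iff]
    omega
  · congr 2
    omega

/-- The averaged laws of the path seen from a uniformly chosen time. -/
def avgLaw (M : MarkovSystem K N E) (x0 : K) (n : ℕ) : Measure (CodeSpace E) :=
  ((n + 1 : ℕ) : ℝ≥0∞)⁻¹ • ∑ k ∈ Finset.range (n + 1), (M.pathLaw x0 (n + 1)).map (embed k)

lemma lintegral_avgLaw (M : MarkovSystem K N E) (x0 : K) (n : ℕ) {f : CodeSpace E → ℝ≥0∞}
    (hf : Measurable f) :
    ∫⁻ σ, f σ ∂(M.avgLaw x0 n) = ((n + 1 : ℕ) : ℝ≥0∞)⁻¹ *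
      ∑ k ∈ Finset.range (n + 1), ∫⁻ l, f (embed k l) ∂(M.pathLaw x0 (n + 1)) := by
  rw [avgLaw, lintegral_smul_measure, lintegral_finsetSum_measure, smul_eq_mul]
  congr 1
  exact Finset.sum_congr rfl fun k _ => lintegral_map hf measurable_from_top

lemma inv_mul_sum_const (n : ℕ) (c : ℝ≥0∞) :
    ((n + 1 : ℕ) : ℝ≥0∞)⁻¹ * ∑ _k ∈ Finset.range (n + 1), c = c := by
  rw [Finset.sum_const, Finset.card_range, nsmul_eq_mul, ← mul_assoc,
    ENNReal.inv_mul_cancel (by simp) (ENNReal.natCast_ne_top _), one_mul]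

instance isProbabilityMeasure_avgLaw (M : MarkovSystem K N E) (x0 : K) (n : ℕ) :
    IsProbabilityMeasure (M.avgLaw x0 n) := by
  constructor
  rw [← lintegral_one, M.lintegral_avgLaw x0 n measurable_const]
  simpa using inv_mul_sum_const n 1

lemma pathLaw_embed_le (M : MarkovSystem K N E) (x0 : K) {V : Finset E} {ε : ℝ≥0∞}
    (hV : ∀ n, M.pathLaw x0 n {l | ∃ e ∉ V, l[0]? = some e} ≤ ε) (n : ℕ) (k j : ℤ) :
    M.pathLaw x0 n {l | ∃ e ∉ V, embed k l j = some e} ≤ ε := by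
  by_cases hjk : j ≤ k
  swap
  · simp [embed, hjk]
  simp only [embed, if_pos hjk]
  obtain ⟨m, hm⟩ : ∃ m : ℕ, (k - j).toNat = m := ⟨_, rfl⟩
  rw [hm]
  by_cases hmn : m ≤ n
  · obtain ⟨r, rfl⟩ := Nat.exists_eq_add_of_le' hmn
    refine le_trans (le_of_eq ?_) (hV r)
    rw [← lintegral_indicator_one MeasurableSpace.measurableSet_top,
      ← lintegral_indicator_one MeasurableSpace.measurableSet_top,
      ← M.lintegral_pathLaw_drop x0 r m]
    simp [Set.indicator, List.getElem?_drop]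
  · refine le_trans (le_of_eq ?_) zero_le
    refine measure_mono_null (t := {l | ¬ (M.Valid x0 l ∧ l.length = n)}) ?_ (M.ae_valid x0 n)
    rintro l ⟨e, -, he⟩ ⟨-, hl⟩
    rw [List.getElem?_eq_none (by omega)] at he
    simp at he

lemma isTightMeasureSet_avgLaw (M : MarkovSystem K N E) [Countable N]
    (hdom : M.HasDominatingChain) (hc : M.cConst ≠ ⊤) (x0 : K) :
    IsTightMeasureSet (Set.range (M.avgLaw x0)) := by
  rw [isTightMeasureSet_iff_exists_isCompact_measure_compl_le]
  intro ε hε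
  obtain ⟨δ, hδ0, hδ⟩ := ENNReal.exists_pos_sum_of_countable' hε.ne' ℤ
  choose V hV using fun j => M.exists_finset_head hdom hc x0 (hδ0 j)
  refine ⟨Set.univ.pi fun j => insert none (some '' (V j : Set E)),
    isCompact_univ_pi fun j => (((V j).finite_toSet.image some).insert none).isCompact, ?_⟩
  rintro _ ⟨n, rfl⟩
  have hsub : (Set.univ.pi fun j => insert none (some '' (V j : Set E)))ᶜ ⊆
      ⋃ j : ℤ, {σ : CodeSpace E | ∃ e ∉ V j, σ j = some e} := by
    intro σ hσ
    simp only [Set.mem_compl_iff, Set.mem_univ_pi, not_forall] at hσ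
    obtain ⟨j, hj⟩ := hσ
    refine Set.mem_iUnion.2 ⟨j, ?_⟩
    cases hs : σ j with
    | none => simp [hs] at hj
    | some e => exact ⟨e, fun he => hj (by simp [hs, he]), hs⟩
  refine (measure_mono hsub).trans ((measure_iUnion_le _).trans (le_trans ?_ hδ.le))
  refine ENNReal.tsum_le_tsum fun j => ?_
  have hmeas : MeasurableSet {σ : CodeSpace E | ∃ e ∉ V j, σ j = some e} :=
    (measurable_pi_apply j : Measurable fun σ : CodeSpace E => σ j)
      (MeasurableSpace.measurableSet_top (s := {o | ∃ e ∉ V j, o = some e}))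
  rw [← lintegral_indicator_one hmeas, M.lintegral_avgLaw x0 n (measurable_one.indicator hmeas)]
  refine le_trans ?_ (inv_mul_sum_const n (δ j)).le
  gcongr with k _
  refine le_trans (le_of_eq ?_) (M.pathLaw_embed_le x0 (hV j) (n + 1) k j)
  rw [← lintegral_indicator_one MeasurableSpace.measurableSet_top]
  rfl

/-- The averaged laws have a weak limit along an ultrafilter. -/
lemma exists_limit_avgLaw (M : MarkovSystem K N E) [Countable N] [Countable E]
    (hdom : M.HasDominatingChain) (hc : M.cConst ≠ ⊤) (x0 : K) :
    ∃ Λ : Measure (CodeSpace E), IsProbabilityMeasure Λ ∧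
      ∀ u : BoundedContinuousFunction (CodeSpace E) ℝ≥0,
        Tendsto (fun n => ∫⁻ σ, u σ ∂(M.avgLaw x0 n)) (hyperfilter ℕ) (𝓝 (∫⁻ σ, u σ ∂Λ)) := by
  let A : ℕ → ProbabilityMeasure (CodeSpace E) := fun n => ⟨M.avgLaw x0 n, inferInstance⟩
  have hcomp : IsCompact (closure (Set.range A)) := by
    refine isCompact_closure_of_isTightMeasureSet ?_
    convert M.isTightMeasureSet_avgLaw hdom hc x0
    ext μ
    constructor
    · rintro ⟨_, ⟨n, rfl⟩, rfl⟩
      exact ⟨n, rfl⟩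
    · rintro ⟨n, rfl⟩
      exact ⟨_, ⟨n, rfl⟩, rfl⟩
  obtain ⟨Λ, -, hΛ⟩ := hcomp.ultrafilter_le_nhds ((hyperfilter ℕ).map A) (by
    rw [le_principal_iff]
    exact mem_of_superset (range_mem_map) subset_closure)
  exact ⟨Λ, inferInstance, (ProbabilityMeasure.tendsto_iff_forall_lintegral_tendsto).1 hΛ⟩

lemma tendsto_const_div_hyperfilter {B : ℝ≥0∞} (hB : B ≠ ⊤) :
    Tendsto (fun n : ℕ => ((n + 1 : ℕ) : ℝ≥0∞)⁻¹ * B) (hyperfilter ℕ) (𝓝 0) := by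
  have h1 : Tendsto (fun n : ℕ => ((n + 1 : ℕ) : ℝ≥0∞)⁻¹) atTop (𝓝 0) :=
    ENNReal.tendsto_inv_nat_nhds_zero.comp (tendsto_add_atTop_nat 1)
  have h2 := ENNReal.Tendsto.mul_const h1 (Or.inr hB)
  rw [zero_mul] at h2
  exact h2.mono_left Nat.hyperfilter_le_atTop

/-- `Λ` is a weak limit of the averaged laws. -/
def IsAvgLimit (M : MarkovSystem K N E) (x0 : K) (Λ : Measure (CodeSpace E)) : Prop :=
  ∀ u : BoundedContinuousFunction (CodeSpace E) ℝ≥0,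
    Tendsto (fun n => ∫⁻ σ, u σ ∂(M.avgLaw x0 n)) (hyperfilter ℕ) (𝓝 (∫⁻ σ, u σ ∂Λ))

lemma lintegral_le_of_avgLaw_le (M : MarkovSystem K N E) [Countable E] {x0 : K}
    {Λ : Measure (CodeSpace E)}
    (hΛ : M.IsAvgLimit x0 Λ) (u v : BoundedContinuousFunction (CodeSpace E) ℝ≥0)
    {c B : ℝ≥0∞} (hB : B ≠ ⊤)
    (h : ∀ n : ℕ, ∑ k ∈ Finset.range (n + 1), ∫⁻ l, u (embed k l) ∂(M.pathLaw x0 (n + 1)) ≤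
      ∑ k ∈ Finset.range (n + 1), ((∫⁻ l, v (embed k l) ∂(M.pathLaw x0 (n + 1))) + c) + B) :
    ∫⁻ σ, u σ ∂Λ ≤ ∫⁻ σ, v σ ∂Λ + c := by
  have hlim := ((hΛ v).add_const c).add (tendsto_const_div_hyperfilter hB)
  rw [add_zero] at hlim
  refine le_of_tendsto_of_tendsto (hΛ u) hlim (Eventually.of_forall fun n => ?_)
  simp only
  rw [M.lintegral_avgLaw x0 n u.continuous.measurable.coe_nnreal_ennreal,
    M.lintegral_avgLaw x0 n v.continuous.measurable.coe_nnreal_ennreal]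
  conv_rhs => rw [← inv_mul_sum_const n c]
  rw [← mul_add, ← mul_add, ← Finset.sum_add_distrib]
  gcongr
  exact h n

lemma coe_le_bound (u : BoundedContinuousFunction (CodeSpace E) ℝ≥0) (σ : CodeSpace E) :
    (u σ : ℝ≥0∞) ≤ (nndist u 0 : ℝ≥0) :=
  ENNReal.coe_le_coe.2 (BoundedContinuousFunction.NNReal.upper_bound u σ)

lemma lintegral_embed_le (M : MarkovSystem K N E) (x0 : K)
    (u : BoundedContinuousFunction (CodeSpace E) ℝ≥0) (n : ℕ) (k : ℤ) :
    ∫⁻ l, u (embed k l) ∂(M.pathLaw x0 n) ≤ (nndist u 0 : ℝ≥0) :=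
  (lintegral_mono fun l => coe_le_bound u (embed k l)).trans (by simp)

/-- Comparison principle: functions of the coordinates up to time `1` can be compared under a
weak limit by comparing them under the laws of long histories. -/
lemma lintegral_le_of_pathLaw_le (M : MarkovSystem K N E) [Countable E] {x0 : K}
    {Λ : Measure (CodeSpace E)}
    (hΛ : M.IsAvgLimit x0 Λ) (u v : BoundedContinuousFunction (CodeSpace E) ℝ≥0)
    (hu : DependsOn u (Set.Iic 1)) (hv : DependsOn v (Set.Iic 1)) {c : ℝ≥0∞} (m : ℕ)
    (h : ∀ n, m ≤ n → ∫⁻ l, u (embed 1 l) ∂(M.pathLaw x0 n) ≤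
      ∫⁻ l, v (embed 1 l) ∂(M.pathLaw x0 n) + c) :
    ∫⁻ σ, u σ ∂Λ ≤ ∫⁻ σ, v σ ∂Λ + c := by
  set b : ℝ≥0∞ := ((nndist u 0 : ℝ≥0) : ℝ≥0∞) with hb
  refine M.lintegral_le_of_avgLaw_le hΛ u v (B := (m + 1 : ℕ) * b)
    (ENNReal.mul_ne_top (ENNReal.natCast_ne_top _) ENNReal.coe_ne_top) fun n => ?_
  have hcard : ((Finset.range (n + 1)).filter fun k => ¬ (1 ≤ k ∧ m + k ≤ n + 2)).card ≤
      m + 1 := by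
    rw [← Finset.card_range (m + 1)]
    refine Finset.card_le_card_of_injOn (fun k => if k = 0 then m else n - k) ?_ ?_
    · intro k hk
      simp only [Finset.coe_filter, Finset.mem_range, Set.mem_ofPred_eq, Finset.coe_range,
        Set.mem_Iio] at hk ⊢
      split_ifs <;> omega
    · intro k hk k' hk' hkk
      simp only [Finset.coe_filter, Finset.mem_range, Set.mem_ofPred_eq] at hk hk' hkk
      split_ifs at hkk <;> omega
  have hsplit : ∀ k ∈ Finset.range (n + 1), ∫⁻ l, u (embed k l) ∂(M.pathLaw x0 (n + 1)) ≤
      (∫⁻ l, v (embed k l) ∂(M.pathLaw x0 (n + 1)) + c) +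
        if ¬ (1 ≤ k ∧ m + k ≤ n + 2) then b else 0 := by
    intro k hk
    rw [Finset.mem_range] at hk
    split_ifs with hk1
    swap
    · exact (M.lintegral_embed_le x0 u _ _).trans le_add_self
    · obtain ⟨k, rfl⟩ := Nat.exists_eq_add_of_le' hk1.1
      obtain ⟨r, hr⟩ := Nat.exists_eq_add_of_le' (show k ≤ n + 1 by omega)
      have hdep : ∀ w : BoundedContinuousFunction (CodeSpace E) ℝ≥0, DependsOn w (Set.Iic 1) →
          ∫⁻ l, w (embed ((k + 1 : ℕ) : ℤ) l) ∂(M.pathLaw x0 (n + 1)) =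
            ∫⁻ l, w (embed 1 l) ∂(M.pathLaw x0 r) := by
        intro w hw
        rw [hr, ← M.lintegral_pathLaw_drop x0 r k fun l => (w (embed 1 l) : ℝ≥0∞)]
        congr 1
        ext l
        rw [hw fun j (hj : j ≤ 1) => ?_]
        push_cast
        exact embed_drop k l hj
      rw [hdep u hu, hdep v hv, add_zero]
      exact h r (by omega)
  refine (Finset.sum_le_sum hsplit).trans ?_
  rw [Finset.sum_add_distrib, ← Finset.sum_filter, Finset.sum_const, nsmul_eq_mul]
  gcongr

lemma map_shift_of_isAvgLimit (M : MarkovSystem K N E) [Countable E] {x0 : K}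
    {Λ : Measure (CodeSpace E)} [IsProbabilityMeasure Λ] (hΛ : M.IsAvgLimit x0 Λ) :
    Measure.map (shiftMap E) Λ = Λ := by
  have hcont : Continuous (shiftMap E) := continuous_pi fun k => continuous_apply (k + 1)
  have := Measure.isProbabilityMeasure_map (μ := Λ) hcont.measurable.aemeasurable
  refine ext_of_forall_lintegral_eq_of_IsFiniteMeasure fun u => ?_
  rw [lintegral_map u.continuous.measurable.coe_nnreal_ennreal hcont.measurable]
  let v : BoundedContinuousFunction (CodeSpace E) ℝ≥0 := u.compContinuous ⟨shiftMap E, hcont⟩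
  have hv : ∀ σ, v σ = u (shiftMap E σ) := fun σ => rfl
  have hvn : ∀ n : ℕ, ∑ k ∈ Finset.range (n + 1),
      ∫⁻ l, v (embed k l) ∂(M.pathLaw x0 (n + 1)) =
      ∑ k ∈ Finset.range n, ∫⁻ l, u (embed k l) ∂(M.pathLaw x0 (n + 1)) +
        ∫⁻ l, u (embed (-1) l) ∂(M.pathLaw x0 (n + 1)) := by
    intro n
    rw [Finset.sum_range_succ']
    simp [hv, embed_shift]
  simp_rw [← hv]
  refine le_antisymm ?_ ?_
  · have h := M.lintegral_le_of_avgLaw_le hΛ v u (c := 0) (B := (nndist u 0 : ℝ≥0))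
      ENNReal.coe_ne_top fun n => ?_
    · simpa using h
    · rw [hvn, Finset.sum_range_succ]
      simp only [add_zero]
      gcongr
      · exact le_self_add
      · exact M.lintegral_embed_le x0 u _ _
  · have h := M.lintegral_le_of_avgLaw_le hΛ u v (c := 0) (B := (nndist u 0 : ℝ≥0))
      ENNReal.coe_ne_top fun n => ?_
    · simpa using h
    · simp only [add_zero]
      rw [hvn, Finset.sum_range_succ]
      gcongr
      · exact le_self_add
      · exact M.lintegral_embed_le x0 u _ _

end Average

section Dependence

variable {E : Type*}

lemma exists_factor_of_dependsOn {X : Type*} {f : CodeSpace E → X} {s : Set ℤ}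
    (hf : DependsOn f s) : ∃ g : (s → Option E) → X, f = g ∘ s.domRestrict :=
  have : Nonempty X := ⟨f fun _ => none⟩
  dependsOn_iff_exists_comp.1 hf

lemma continuous_of_dependsOn {X : Type*} [TopologicalSpace X] {f : CodeSpace E → X} {s : Set ℤ}
    (hs : s.Finite) (hf : DependsOn f s) : Continuous f := by
  obtain ⟨g, rfl⟩ := exists_factor_of_dependsOn hf
  have := hs.to_subtype
  exact continuous_of_discreteTopology.comp (continuous_pi fun j => continuous_apply _)

lemma measurable_past_apply [Countable E] {j : ℤ} (hj : j ≤ 0) :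
    Measurable[pastAlgebra E] fun σ : CodeSpace E => σ j := by
  refine @measurable_to_countable' _ _ _ _ (pastAlgebra E) _ fun o => ?_
  have hset : (fun σ : CodeSpace E => σ j) ⁻¹' {o} =
      ⋃ v : {v : Fin ((-j).toNat + 1) → Option E // v 0 = o},
        cylSetL (1 - ((List.ofFn v.1).length : ℤ)) (List.ofFn v.1) := by
    ext σ
    simp only [Set.mem_preimage, Set.mem_singleton_iff, Set.mem_iUnion, cylSetL,
      Set.mem_ofPred_eq, List.length_ofFn, List.get_eq_getElem, List.getElem_ofFn]
    constructor
    · intro h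
      refine ⟨⟨fun k => σ (j + k), by simpa using h⟩, fun k hk => ?_⟩
      simp only
      congr 1
      push_cast
      omega
    · rintro ⟨⟨v, rfl⟩, h⟩
      have := h 0 (by simp)
      simp only [Fin.mk_zero'] at this
      rw [← this]
      congr 1
      push_cast
      omega
  rw [hset]
  refine MeasurableSet.iUnion fun v => MeasurableSpace.measurableSet_generateFrom ⟨_, ?_, rfl⟩
  rw [← List.length_pos_iff]
  simp

lemma measurable_past_of_dependsOn [Countable E] {X : Type*} [MeasurableSpace X]
    {f : CodeSpace E → X} {s : Set ℤ} (hs : s.Finite) (hs0 : s ⊆ Set.Iic 0)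
    (hf : DependsOn f s) : Measurable[pastAlgebra E] f := by
  obtain ⟨g, rfl⟩ := exists_factor_of_dependsOn hf
  have := hs.to_subtype
  refine (measurable_of_countable g).comp ?_
  exact @measurable_pi_lambda _ _ _ (pastAlgebra E) _ _ fun j => measurable_past_apply (hs0 j.2)

lemma measurable_of_dependsOn [Countable E] {X : Type*} [MeasurableSpace X]
    {f : CodeSpace E → X} {s : Set ℤ} (hs : s.Finite) (hf : DependsOn f s) : Measurable f := by
  obtain ⟨g, rfl⟩ := exists_factor_of_dependsOn hf
  have := hs.to_subtype
  exact (measurable_of_countable g).comp (measurable_pi_lambda _ fun j => measurable_pi_apply _)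

/-- Events determined by finitely many coordinates at nonpositive times. -/
def pastEvents (E : Type*) : Set (Set (CodeSpace E)) :=
  {A | ∃ s : Set ℤ, s.Finite ∧ s ⊆ Set.Iic 0 ∧ DependsOn (fun σ => σ ∈ A) s}

lemma univ_mem_pastEvents : Set.univ ∈ pastEvents E :=
  ⟨∅, Set.finite_empty, Set.empty_subset _, fun _ _ _ => rfl⟩

lemma measurableSet_of_mem_pastEvents [Countable E] {A : Set (CodeSpace E)}
    (hA : A ∈ pastEvents E) : MeasurableSet A := by
  obtain ⟨s, hs, -, h⟩ := hA
  exact measurableSet_setOfPred.2 (measurable_of_dependsOn hs h)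

lemma isPiSystem_pastEvents : IsPiSystem (pastEvents E) := by
  rintro A ⟨s, hs, hs0, hA⟩ B ⟨r, hr, hr0, hB⟩ -
  refine ⟨s ∪ r, hs.union hr, Set.union_subset hs0 hr0, fun σ τ h => ?_⟩
  have h1 := hA fun j hj => h j (Or.inl hj)
  have h2 := hB fun j hj => h j (Or.inr hj)
  simp only [Set.mem_inter_iff] at h1 h2 ⊢
  rw [h1, h2]

lemma pastAlgebra_le_generateFrom :
    pastAlgebra E ≤ MeasurableSpace.generateFrom (pastEvents E) := by
  refine MeasurableSpace.generateFrom_mono ?_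
  rintro _ ⟨es, -, rfl⟩
  refine ⟨Set.Icc (1 - es.length) 0, Set.finite_Icc _ _, fun j hj => hj.2, fun σ τ h => ?_⟩
  simp only [cylSetL, Set.mem_ofPred_eq, eq_iff_iff]
  refine forall₂_congr fun k hk => ?_
  rw [h _ ⟨by omega, by omega⟩]

lemma pastAlgebra_le [Countable E] : pastAlgebra E ≤ MeasurableSpace.pi :=
  pastAlgebra_le_generateFrom.trans
    (MeasurableSpace.generateFrom_le fun _ => measurableSet_of_mem_pastEvents)

/-- Two integrable densities with the same integrals over events determined by finitely many
past coordinates have the same integrals over all past events. -/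
lemma setLIntegral_eq_of_pastEvents [Countable E] {Λ : Measure (CodeSpace E)}
    {f g : CodeSpace E → ℝ≥0∞} (hf : ∫⁻ σ, f σ ∂Λ ≠ ⊤)
    (h : ∀ A ∈ pastEvents E, ∫⁻ σ in A, f σ ∂Λ = ∫⁻ σ in A, g σ ∂Λ) {A : Set (CodeSpace E)}
    (hA : MeasurableSet[pastAlgebra E] A) : ∫⁻ σ in A, f σ ∂Λ = ∫⁻ σ in A, g σ ∂Λ := by
  have huniv : ∫⁻ σ, f σ ∂Λ = ∫⁻ σ, g σ ∂Λ := by simpa using h _ univ_mem_pastEvents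
  have hle : MeasurableSpace.generateFrom (pastEvents E) ≤ MeasurableSpace.pi :=
    MeasurableSpace.generateFrom_le fun _ => measurableSet_of_mem_pastEvents
  refine MeasurableSpace.induction_on_inter
    (C := fun A _ => ∫⁻ σ in A, f σ ∂Λ = ∫⁻ σ in A, g σ ∂Λ) rfl isPiSystem_pastEvents
    (by simp) h (fun B hB hfg => ?_) (fun B hd hB hfg => ?_) A (pastAlgebra_le_generateFrom A hA)
  · have h1 := lintegral_add_compl (μ := Λ) f (hle B hB)
    have h2 := lintegral_add_compl (μ := Λ) g (hle B hB)
    rw [← huniv, ← h1, hfg] at h2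
    refine ((ENNReal.add_right_inj ?_).1 h2).symm
    rw [← hfg]
    exact ne_top_of_le_ne_top hf (setLIntegral_le_lintegral _ _)
  · rw [lintegral_iUnion (fun n => hle _ (hB n)) hd, lintegral_iUnion (fun n => hle _ (hB n)) hd]
    simp_rw [hfg]

end Dependence

section Orbit

variable {K : Type*} [MetricSpace K] [MeasurableSpace K] {N E : Type*}

lemma iterW_succ_eq (M : MarkovSystem K N E) (σ : CodeSpace E) (n : ℕ) (y : K) :
    M.iterW σ (n + 1) y = M.wext (σ 0) (M.iterW (fun j => σ (j - 1)) n y) := by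
  induction n generalizing y with
  | zero => simp [iterW]
  | succ n ih =>
    rw [iterW, ih, iterW]
    congr 4

lemma orbit_zero (M : MarkovSystem K N E) (j0 : N) (xp : N → K) (σ : CodeSpace E) :
    M.orbit j0 xp σ 0 = M.wext (σ 0) (xp (M.iext j0 (σ 0))) := by
  simp [orbit, iterW]

lemma orbit_succ (M : MarkovSystem K N E) (j0 : N) (xp : N → K) (σ : CodeSpace E) (n : ℕ) :
    M.orbit j0 xp σ (n + 1) = M.wext (σ 0) (M.orbit j0 xp (fun j => σ (j - 1)) n) := by
  rw [orbit, iterW_succ_eq, orbit]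
  congr 5
  push_cast
  ring

lemma dependsOn_orbit (M : MarkovSystem K N E) (j0 : N) (xp : N → K) (n : ℕ) :
    DependsOn (fun σ => M.orbit j0 xp σ n) (Set.Icc (-(n : ℤ)) 0) := by
  induction n with
  | zero =>
    intro σ τ h
    simp only [orbit_zero]
    rw [h 0 (by simp)]
  | succ n ih =>
    intro σ τ h
    simp only [orbit_succ]
    rw [h 0 ⟨by omega, le_rfl⟩]
    congr 1
    refine ih fun j hj => h _ ⟨?_, ?_⟩
    · have := hj.1
      push_cast
      omega
    · have := hj.2
      omega

lemma orbit_mem (M : MarkovSystem K N E) (j0 : N) {xp : N → K} (hxp : ∀ j, xp j ∈ M.Kset j)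
    {σ : CodeSpace E} (hσ : σ ∈ M.pathSpace) {e : E} (he : σ 0 = some e) (n : ℕ) :
    M.orbit j0 xp σ n ∈ M.Kset (M.t e) := by
  induction n generalizing σ e with
  | zero =>
    rw [orbit_zero, he]
    exact M.w_mapsTo e (hxp _)
  | succ n ih =>
    rw [orbit_succ, he]
    obtain ⟨e1, e2, h1, h2, h12⟩ := hσ (-1)
    obtain rfl : e2 = e := Option.some_injective _ (h2.symm.trans he)
    refine M.w_mapsTo e2 ?_
    rw [h12]
    refine ih (fun k => ?_) h1
    have := hσ (k - 1)
    rwa [show k - 1 + 1 = k + 1 - 1 by ring] at this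

lemma embed_zero_cons (e : E) (h : List E) : embed 0 (e :: h) 0 = some e := by
  simp [embed]

lemma embed_one_cons (e : E) (h : List E) : embed 1 (e :: h) 1 = some e := by
  simp [embed]

lemma embed_one_eq (l : List E) {j : ℤ} (hj : j ≤ 0) : embed 1 l j = embed 0 l.tail j := by
  have := embed_drop 1 l hj
  simpa using this

lemma embed_zero_sub_one (e : E) (h : List E) {j : ℤ} (hj : j ≤ 0) :
    embed 0 (e :: h) (j - 1) = embed 0 h j := by
  have h1 := congrFun (embed_shift 1 (e :: h)) (j - 1)
  simp only [shiftMap, sub_add_cancel, sub_self] at h1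
  rw [← h1, embed_one_eq _ hj, List.tail_cons]

lemma orbit_embed (M : MarkovSystem K N E) (j0 : N) (xp : N → K) (n : ℕ) (h : List E)
    (hv : M.Valid (xp j0) h) (hn : n + 1 ≤ h.length) :
    M.orbit j0 xp (embed 0 h) n = M.approx xp (xp j0) (n + 1) h := by
  induction n generalizing h with
  | zero =>
    obtain _ | ⟨e, h⟩ := h
    · simp at hn
    · rw [orbit_zero, embed_zero_cons]
      simp [approx, wext, iext, M.idx_eq hv.1]
  | succ n ih =>
    obtain _ | ⟨e, h⟩ := h
    · simp at hn
    · rw [orbit_succ, embed_zero_cons, approx, ← ih h hv.2 (by simpa using hn)]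
      simp only [wext, Option.elim_some]
      congr 1
      exact M.dependsOn_orbit j0 xp n fun j hj => embed_zero_sub_one e h hj.2

lemma orbit_embed_one (M : MarkovSystem K N E) (j0 : N) (xp : N → K) (n : ℕ) (l : List E) :
    M.orbit j0 xp (embed 1 l) n = M.orbit j0 xp (embed 0 l.tail) n :=
  M.dependsOn_orbit j0 xp n fun _ hj => embed_one_eq l hj.2

end Orbit

section Limit

variable {K : Type*} [MetricSpace K] [MeasurableSpace K] {N E : Type*} [Countable E]

lemma lintegral_le_of_dependsOn (M : MarkovSystem K N E) {x0 : K} {Λ : Measure (CodeSpace E)}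
    (hΛ : M.IsAvgLimit x0 Λ) {f g : CodeSpace E → ℝ≥0} (hf1 : ∀ σ, f σ ≤ 1) (hg1 : ∀ σ, g σ ≤ 1)
    {s : Set ℤ} (hs : s.Finite) (hs1 : s ⊆ Set.Iic 1) (hf : DependsOn f s) (hg : DependsOn g s)
    {c : ℝ≥0∞} (m : ℕ)
    (h : ∀ n, m ≤ n → ∫⁻ l, f (embed 1 l) ∂(M.pathLaw x0 n) ≤
      ∫⁻ l, g (embed 1 l) ∂(M.pathLaw x0 n) + c) :
    ∫⁻ σ, f σ ∂Λ ≤ ∫⁻ σ, g σ ∂Λ + c := by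
  have hdist : ∀ f : CodeSpace E → ℝ≥0, (∀ σ, f σ ≤ 1) → ∀ σ τ, dist (f σ) (f τ) ≤ 1 := by
    intro f hf σ τ
    have h1 : (f σ : ℝ) ≤ 1 := hf σ
    have h2 : (f τ : ℝ) ≤ 1 := hf τ
    rw [NNReal.dist_eq, abs_le]
    constructor <;> linarith [(f σ).coe_nonneg, (f τ).coe_nonneg]
  exact M.lintegral_le_of_pathLaw_le hΛ
    (.mkOfBound ⟨f, continuous_of_dependsOn hs hf⟩ 1 (hdist f hf1))
    (.mkOfBound ⟨g, continuous_of_dependsOn hs hg⟩ 1 (hdist g hg1))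
    (fun σ τ hστ => hf fun j hj => hστ j (hs1 hj)) (fun σ τ hστ => hg fun j hj => hστ j (hs1 hj))
    m h

lemma ae_mem_pathSpace (M : MarkovSystem K N E) {x0 : K} {Λ : Measure (CodeSpace E)}
    [IsProbabilityMeasure Λ] (hΛ : M.IsAvgLimit x0 Λ) : ∀ᵐ σ ∂Λ, σ ∈ M.pathSpace := by
  set good : CodeSpace E → Prop := fun σ =>
    ∃ e e' : E, σ 0 = some e ∧ σ 1 = some e' ∧ M.i e' = M.t e with hgood
  have hdep : DependsOn good {0, 1} := fun σ τ h => by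
    simp only [hgood]
    rw [h 0 (by simp), h 1 (by simp)]
  have hfin : ({0, 1} : Set ℤ).Finite := Set.toFinite _
  have h0 : ∀ᵐ σ ∂Λ, good σ := by
    have hdep' : DependsOn (fun σ => if good σ then (0 : ℝ≥0) else 1) {0, 1} :=
      fun σ τ hστ => by simp only [hdep hστ]
    have h := M.lintegral_le_of_dependsOn hΛ (f := fun σ => if good σ then (0 : ℝ≥0) else 1)
      (g := 0) (c := 0) (fun σ => by split_ifs <;> simp) (fun σ => zero_le)
      hfin (by intro j hj; rcases hj with rfl | rfl <;> simp) hdep' (fun _ _ _ => rfl) 2 ?_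
    · simp only [Pi.zero_apply, ENNReal.coe_zero, lintegral_zero, add_zero,
        nonpos_iff_eq_zero] at h
      rw [lintegral_eq_zero_iff (measurable_of_dependsOn hfin hdep').coe_nnreal_ennreal] at h
      filter_upwards [h] with σ hσ
      by_contra hg
      simp [hg] at hσ
    · intro n hn
      refine le_trans (le_of_eq ?_) zero_le
      rw [lintegral_eq_zero_iff measurable_from_top]
      filter_upwards [M.ae_valid x0 n] with l ⟨hv, hl⟩
      obtain _ | ⟨e', _ | ⟨e, h⟩⟩ := l
      · simp at hl; omega
      · simp at hl; omega
      have : good (embed 1 (e' :: e :: h)) := by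
        refine ⟨e, e', ?_, embed_one_cons _ _, M.eq_of_mem hv.1 (M.pos_mem_of_valid_cons hv.2)⟩
        rw [embed_one_eq _ le_rfl]
        exact embed_zero_cons e h
      simp [this]
  have hmp : MeasurePreserving (shiftMap E) Λ Λ :=
    ⟨measurable_pi_lambda _ fun k => measurable_pi_apply _, M.map_shift_of_isAvgLimit hΛ⟩
  have hstep : ∀ n : ℤ, Λ {σ | ¬ good fun k => σ (k + n)} = 0 ↔
      Λ {σ | ¬ good fun k => σ (k + (n + 1))} = 0 := by
    intro n
    have hm : MeasurableSet {σ : CodeSpace E | ¬ good fun k => σ (k + n)} :=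
      (measurable_pi_lambda (fun (σ : CodeSpace E) k => σ (k + n)) fun k => measurable_pi_apply _)
        (measurableSet_setOfPred.2 (measurable_of_dependsOn hfin hdep)).compl
    rw [← hmp.measure_preimage hm.nullMeasurableSet]
    simp [shiftMap, add_assoc]
  have hall : ∀ n : ℤ, ∀ᵐ σ ∂Λ, good fun k => σ (k + n) := by
    intro n
    rw [ae_iff]
    induction n with
    | zero => simpa [ae_iff] using h0
    | succ n ih => exact (hstep n).1 ih
    | pred n ih => exact (hstep _).2 (by simpa using ih)
  filter_upwards [ae_all_iff.2 hall] with σ hσ n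
  simpa [hgood, add_comm] using hσ n

end Limit

section Convergence

variable {K : Type*} [MetricSpace K] [MeasurableSpace K] {N E : Type*}

lemma dependsOn_min_nndist_orbit (M : MarkovSystem K N E) (j0 : N) (xp : N → K) (m : ℕ) :
    DependsOn (fun σ : CodeSpace E =>
      min 1 (nndist (M.orbit j0 xp σ m) (M.orbit j0 xp σ (m + 1))))
      (Set.Icc (-((m + 1 : ℕ) : ℤ)) 0) := by
  intro σ τ h
  have h1 : M.orbit j0 xp σ (m + 1) = M.orbit j0 xp τ (m + 1) := M.dependsOn_orbit j0 xp (m + 1) h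
  have h2 : M.orbit j0 xp σ m = M.orbit j0 xp τ m := M.dependsOn_orbit j0 xp m fun j hj =>
    h j ⟨by have := hj.1; push_cast; omega, hj.2⟩
  simp only [h1, h2]

lemma lintegral_min_nndist_orbit_le [Countable E] (M : MarkovSystem K N E) {xp : N → K}
    (hxp : ∀ j, xp j ∈ M.Kset j) (j0 : N) {a : ℝ} (ha : 0 ≤ a) (hcon : M.IsContractive a)
    {C : ℝ≥0∞} (hC : ENNReal.ofReal a * C + M.bConst xp ≤ C) {Λ : Measure (CodeSpace E)}
    (hΛ : M.IsAvgLimit (xp j0) Λ) (m : ℕ) :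
    ∫⁻ σ, (min 1 (nndist (M.orbit j0 xp σ m) (M.orbit j0 xp σ (m + 1))) : ℝ≥0) ∂Λ ≤
      ENNReal.ofReal a ^ (m + 1) * C + ENNReal.ofReal a ^ (m + 2) * C := by
  have h := M.lintegral_le_of_dependsOn hΛ (g := 0)
    (c := ENNReal.ofReal a ^ (m + 1) * C + ENNReal.ofReal a ^ (m + 2) * C)
    (fun σ => min_le_left _ _) (fun σ => zero_le) (Set.finite_Icc _ _)
    (fun j hj => hj.2.trans (by norm_num)) (M.dependsOn_min_nndist_orbit j0 xp m) (fun _ _ _ => rfl) (m + 3) ?_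
  · simpa using h
  · intro n hn
    obtain ⟨n, rfl⟩ := Nat.exists_eq_add_of_le' (show 1 ≤ n by omega)
    simp only [Pi.zero_apply, ENNReal.coe_zero, lintegral_zero, zero_add]
    refine le_trans ?_ (add_le_add (M.lintegral_dist_approx_le hxp j0 ha hcon hC (m + 1) n)
      (M.lintegral_dist_approx_le hxp j0 ha hcon hC (m + 2) n))
    rw [← lintegral_add_left measurable_from_top]
    simp_rw [orbit_embed_one]
    rw [M.lintegral_pathLaw_tail (xp j0) n fun l =>
      ((min 1 (nndist (M.orbit j0 xp (embed 0 l) m) (M.orbit j0 xp (embed 0 l) (m + 1))) : ℝ≥0) :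
        ℝ≥0∞)]
    refine lintegral_mono_ae ?_
    filter_upwards [M.ae_valid (xp j0) n] with l ⟨hv, hl⟩
    rw [M.orbit_embed j0 xp m l hv (by omega), M.orbit_embed j0 xp (m + 1) l hv (by omega)]
    refine (ENNReal.coe_le_coe.2 (min_le_right _ _)).trans ?_
    rw [← edist_nndist, ← edist_dist, ← edist_dist]
    exact edist_triangle_left _ _ _

lemma tsum_pow_mul_ne_top {a : ℝ} (ha1 : a < 1) {C : ℝ≥0∞} (hC : C ≠ ⊤) (k : ℕ) :
    ∑' m : ℕ, ENNReal.ofReal a ^ (m + k) * C ≠ ⊤ := by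
  simp_rw [pow_add, mul_assoc]
  rw [ENNReal.tsum_mul_right, ENNReal.tsum_geometric]
  refine ENNReal.mul_ne_top (ENNReal.inv_ne_top.2 ?_)
    (ENNReal.mul_ne_top (ENNReal.pow_ne_top ENNReal.ofReal_ne_top) hC)
  refine (tsub_pos_of_lt ?_).ne'
  simpa using ha1

lemma summable_of_summable_min_one {y : ℕ → ℝ} (h : Summable fun m => min 1 (y m)) :
    Summable y := by
  have hlt : ∀ᶠ m in atTop, min 1 (y m) < 1 :=
    h.tendsto_atTop_zero.eventually_lt_const zero_lt_one
  refine h.congr_cofinite ?_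
  rw [Nat.cofinite_eq_atTop]
  filter_upwards [hlt] with m hm
  exact min_eq_right ((min_lt_iff.1 hm).resolve_left (lt_irrefl _)).le

lemma exists_tendsto_of_summable_min {X : Type*} [MetricSpace X] [CompleteSpace X] {x : ℕ → X}
    (h : Summable fun m => min 1 (nndist (x m) (x (m + 1)))) : ∃ l, Tendsto x atTop (𝓝 l) := by
  refine cauchySeq_tendsto_of_complete (cauchySeq_of_summable_dist
    (summable_of_summable_min_one ?_))
  simpa using NNReal.summable_coe.2 h

lemma ae_mem_codeDomain [Countable E] [CompleteSpace K] (M : MarkovSystem K N E) {xp : N → K}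
    (hxp : ∀ j, xp j ∈ M.Kset j) (j0 : N) {a : ℝ} (ha : 0 ≤ a) (ha1 : a < 1)
    (hcon : M.IsContractive a) {C : ℝ≥0∞} (hCtop : C ≠ ⊤)
    (hC : ENNReal.ofReal a * C + M.bConst xp ≤ C) {Λ : Measure (CodeSpace E)}
    [IsProbabilityMeasure Λ] (hΛ : M.IsAvgLimit (xp j0) Λ) :
    ∀ᵐ σ ∂Λ, σ ∈ M.codeDomain j0 xp := by
  have hmeas : ∀ m, Measurable fun σ : CodeSpace E =>
      ((min 1 (nndist (M.orbit j0 xp σ m) (M.orbit j0 xp σ (m + 1))) : ℝ≥0) : ℝ≥0∞) := fun m =>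
    (measurable_of_dependsOn (Set.finite_Icc (-((m + 1 : ℕ) : ℤ)) 0)
      (M.dependsOn_min_nndist_orbit j0 xp m)).coe_nnreal_ennreal
  have hfin : ∫⁻ σ, ∑' m, ((min 1 (nndist (M.orbit j0 xp σ m) (M.orbit j0 xp σ (m + 1))) : ℝ≥0) :
      ℝ≥0∞) ∂Λ ≠ ⊤ := by
    rw [lintegral_tsum fun m => (hmeas m).aemeasurable]
    refine ne_top_of_le_ne_top ?_ (ENNReal.tsum_le_tsum fun m =>
      M.lintegral_min_nndist_orbit_le hxp j0 ha hcon hC hΛ m)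
    rw [ENNReal.tsum_add]
    exact ENNReal.add_ne_top.2 ⟨tsum_pow_mul_ne_top ha1 hCtop 1, tsum_pow_mul_ne_top ha1 hCtop 2⟩
  filter_upwards [M.ae_mem_pathSpace hΛ,
    ae_lt_top' (AEMeasurable.tsum fun m => (hmeas m).aemeasurable) hfin] with σ h1 h2
  exact ⟨h1, exists_tendsto_of_summable_min (ENNReal.tsum_coe_ne_top_iff_summable.1 h2.ne)⟩

/-- Along the coding domain, transition probabilities evaluated at the approximating orbit
converge to the extended transition probabilities at the coded point. -/
lemma tendsto_p_orbit (M : MarkovSystem K N E) (j0 : N) {xp : N → K}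
    (hxp : ∀ j, xp j ∈ M.Kset j) {pbar : E → K → ℝ} (hpbar : M.IsUCExtensionP pbar) (e : E)
    {σ : CodeSpace E} (hσ : σ ∈ M.codeDomain j0 xp) :
    Tendsto (fun m => M.p e (M.orbit j0 xp σ m)) atTop
      (𝓝 ((M.Tset (M.i e)).indicator (fun σ => pbar e (M.code j0 xp σ)) σ)) := by
  obtain ⟨e0, e1, h0, -⟩ := hσ.1 0
  have hlim : Tendsto (fun m => M.orbit j0 xp σ m) atTop (𝓝 (M.code j0 xp σ)) := by
    rw [code, dif_pos hσ]
    exact hσ.2.choose_spec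
  by_cases ht : M.t e0 = M.i e
  · have hmem : ∀ m, M.orbit j0 xp σ m ∈ M.Kset (M.i e) := fun m =>
      ht ▸ M.orbit_mem j0 hxp hσ.1 h0 m
    rw [Set.indicator_of_mem (show σ ∈ M.Tset (M.i e) from ⟨hσ.1, e0, h0, ht⟩)]
    have hcl : M.code j0 xp σ ∈ closure (M.Kset (M.i e)) :=
      mem_closure_of_tendsto hlim (Eventually.of_forall hmem)
    have h := ((hpbar e).1 _ hcl).tendsto.comp (tendsto_nhdsWithin_iff.2
      ⟨hlim, Eventually.of_forall fun m => subset_closure (hmem m)⟩)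
    exact h.congr fun m => (hpbar e).2.1 _ (hmem m)
  · rw [Set.indicator_of_notMem]
    · refine tendsto_const_nhds.congr fun m => (M.p_zero_outside e _ fun hm => ht ?_).symm
      exact M.eq_of_mem (M.orbit_mem j0 hxp hσ.1 h0 m) hm
    · rintro ⟨-, e2, h2, ht2⟩
      obtain rfl := Option.some_injective _ (h0.symm.trans h2)
      exact ht ht2

end Convergence

section Conditional

variable {K : Type*} [MetricSpace K] [MeasurableSpace K] {N E : Type*}

/-- Uniform continuity of `p_e`, with the error controlled by the distance. -/
lemma exists_ofReal_p_le (M : MarkovSystem K N E) (huc : M.IsUniformlyContinuous) (e : E)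
    {ε : ℝ} (hε : 0 < ε) : ∃ δ > 0, ∀ j, ∀ x ∈ M.Kset j, ∀ y ∈ M.Kset j,
      ENNReal.ofReal (M.p e x) ≤ ENNReal.ofReal (M.p e y) +
        (ENNReal.ofReal ε + ENNReal.ofReal (dist x y) / ENNReal.ofReal δ) := by
  obtain ⟨δ, hδ, h⟩ := Metric.uniformContinuousOn_iff.1 (huc e).2 ε hε
  refine ⟨δ, hδ, fun j x hx y hy => ?_⟩
  by_cases hj : j = M.i e
  · subst hj
    rcases lt_or_ge (dist x y) δ with hd | hd
    · have hp := (abs_lt.1 (h x hx y hy hd)).2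
      rw [← add_assoc]
      refine le_add_right ?_
      rw [← ENNReal.ofReal_add (M.p_nonneg e y) hε.le]
      exact ENNReal.ofReal_le_ofReal (by linarith)
    · refine le_trans ?_ (le_add_self.trans le_add_self)
      rw [← ENNReal.ofReal_div_of_pos hδ]
      refine ENNReal.ofReal_le_ofReal ((M.p_le_one e x).trans ?_)
      rwa [one_le_div hδ]
  · rw [M.p_zero_outside e x fun hx' => hj (M.eq_of_mem hx hx'), ENNReal.ofReal_zero]
    exact zero_le

/-- Integrals of `1_A · p_e` along the approximating orbits. -/
lemma lintegral_embed_indicator_letter (M : MarkovSystem K N E) (x0 : K) (e : E)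
    {A : Set (CodeSpace E)} (hA : A ∈ pastEvents E) (n : ℕ) :
    ∫⁻ l, ((A ∩ {σ | σ 1 = some e}).indicator 1 (embed 1 l) : ℝ≥0) ∂(M.pathLaw x0 (n + 1)) =
      ∫⁻ h, A.indicator 1 (embed 0 h) * ENNReal.ofReal (M.p e (M.pos x0 h))
        ∂(M.pathLaw x0 n) := by
  obtain ⟨s, -, hs0, hA⟩ := hA
  rw [lintegral_pathLaw_succ]
  refine lintegral_congr fun h => ?_
  rw [tsum_eq_single e fun e' he' => by simp [embed_one_cons, he']]
  have : embed 1 (e :: h) ∈ A ↔ embed 0 h ∈ A :=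
    iff_of_eq (hA fun j hj => embed_one_eq _ (hs0 hj))
  by_cases hh : embed 0 h ∈ A <;> simp [Set.indicator, this, hh, embed_one_cons]

lemma lintegral_embed_indicator_orbit (M : MarkovSystem K N E) (xp : N → K) (j0 : N) (e : E)
    {A : Set (CodeSpace E)} (hA : A ∈ pastEvents E) {m n : ℕ} (hmn : m + 1 ≤ n) :
    ∫⁻ l, (A.indicator (fun σ => (M.p e (M.orbit j0 xp σ m)).toNNReal) (embed 1 l) : ℝ≥0)
        ∂(M.pathLaw (xp j0) (n + 1)) =
      ∫⁻ h, A.indicator 1 (embed 0 h) *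
        ENNReal.ofReal (M.p e (M.approx xp (xp j0) (m + 1) h)) ∂(M.pathLaw (xp j0) n) := by
  obtain ⟨s, -, hs0, hA⟩ := hA
  have htail : ∀ l : List E,
      A.indicator (fun σ => (M.p e (M.orbit j0 xp σ m)).toNNReal) (embed 1 l) =
        A.indicator (fun σ => (M.p e (M.orbit j0 xp σ m)).toNNReal) (embed 0 l.tail) := by
    intro l
    have : embed 1 l ∈ A ↔ embed 0 l.tail ∈ A :=
      iff_of_eq (hA fun j hj => embed_one_eq _ (hs0 hj))
    simp only [Set.indicator, this, orbit_embed_one]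
  simp_rw [htail]
  rw [M.lintegral_pathLaw_tail (xp j0) n fun l =>
    ((A.indicator (fun σ => (M.p e (M.orbit j0 xp σ m)).toNNReal) (embed 0 l) : ℝ≥0) : ℝ≥0∞)]
  refine lintegral_congr_ae ?_
  filter_upwards [M.ae_valid (xp j0) n] with l ⟨hv, hl⟩
  rw [← M.orbit_embed j0 xp m l hv (by omega)]
  by_cases hh : embed 0 l ∈ A <;> simp [Set.indicator, hh, ENNReal.ofReal]

/-- The error made when the position is replaced by the approximating orbit. -/
lemma lintegral_p_le (M : MarkovSystem K N E) {xp : N → K}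
    (hxp : ∀ j, xp j ∈ M.Kset j) (j0 : N) {a : ℝ} (ha : 0 ≤ a) (hcon : M.IsContractive a)
    {C : ℝ≥0∞} (hC : ENNReal.ofReal a * C + M.bConst xp ≤ C) (m n : ℕ) {ε δ : ℝ}
    (A : Set (CodeSpace E)) {X Y : List E → K} {e : E}
    (hXY : ∀ h, M.Valid (xp j0) h → ENNReal.ofReal (M.p e (X h)) ≤ ENNReal.ofReal (M.p e (Y h)) +
      (ENNReal.ofReal ε + ENNReal.ofReal (dist (M.pos (xp j0) h) (M.approx xp (xp j0) m h)) /
        ENNReal.ofReal δ)) :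
    ∫⁻ h, A.indicator 1 (embed 0 h) * ENNReal.ofReal (M.p e (X h)) ∂(M.pathLaw (xp j0) n) ≤
      ∫⁻ h, A.indicator 1 (embed 0 h) * ENNReal.ofReal (M.p e (Y h)) ∂(M.pathLaw (xp j0) n) +
        (ENNReal.ofReal ε + ENNReal.ofReal a ^ m * C / ENNReal.ofReal δ) := by
  calc _ ≤ ∫⁻ h, (A.indicator 1 (embed 0 h) * ENNReal.ofReal (M.p e (Y h)) +
        (ENNReal.ofReal ε + ENNReal.ofReal (dist (M.pos (xp j0) h) (M.approx xp (xp j0) m h)) /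
          ENNReal.ofReal δ)) ∂(M.pathLaw (xp j0) n) := by
        refine lintegral_mono_ae ?_
        filter_upwards [M.ae_valid (xp j0) n] with h hv
        by_cases hh : embed 0 h ∈ A
        · simpa [hh] using hXY h hv.1
        · simp [hh]
    _ ≤ _ := by
        rw [lintegral_add_left measurable_from_top, lintegral_add_left measurable_const]
        simp_rw [div_eq_mul_inv]
        rw [lintegral_mul_const _ measurable_from_top]
        gcongr
        · simp
        · exact M.lintegral_dist_approx_le hxp j0 ha hcon hC m n

lemma dependsOn_indicator_orbit (M : MarkovSystem K N E) (j0 : N) (xp : N → K) (e : E) (m : ℕ)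
    {A : Set (CodeSpace E)} {s : Set ℤ} (hA : DependsOn (fun σ => σ ∈ A) s) :
    DependsOn (A.indicator fun σ => (M.p e (M.orbit j0 xp σ m)).toNNReal)
      (s ∪ Set.Icc (-(m : ℤ)) 0) := by
  intro σ τ h
  have h1 : M.orbit j0 xp σ m = M.orbit j0 xp τ m :=
    M.dependsOn_orbit j0 xp m fun j hj => h j (Or.inr hj)
  have h2 : (σ ∈ A) = (τ ∈ A) := hA fun j hj => h j (Or.inl hj)
  simp only [Set.indicator, h1, h2]

lemma dependsOn_indicator_letter (e : E) {A : Set (CodeSpace E)} {s : Set ℤ}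
    (hA : DependsOn (fun σ => σ ∈ A) s) :
    DependsOn ((A ∩ {σ | σ 1 = some e}).indicator (1 : CodeSpace E → ℝ≥0)) (insert 1 s) := by
  intro σ τ h
  have h1 : σ 1 = τ 1 := h 1 (Set.mem_insert _ _)
  have h2 : (σ ∈ A) = (τ ∈ A) := hA fun j hj => h j (Set.mem_insert_of_mem _ hj)
  simp only [Set.indicator, Set.mem_inter_iff, Set.mem_ofPred_eq, h1, h2, Pi.one_apply]

/-- The probability of the next letter is given by the transition probabilities along the
approximating orbit, up to a small error. -/
lemma lintegral_letter_orbit_le [Countable E] (M : MarkovSystem K N E) {xp : N → K}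
    (hxp : ∀ j, xp j ∈ M.Kset j) (j0 : N) {a : ℝ} (ha : 0 ≤ a) (hcon : M.IsContractive a)
    (huc : M.IsUniformlyContinuous)
    {C : ℝ≥0∞} (hC : ENNReal.ofReal a * C + M.bConst xp ≤ C) {Λ : Measure (CodeSpace E)}
    (hΛ : M.IsAvgLimit (xp j0) Λ) (e : E) {A : Set (CodeSpace E)} (hA : A ∈ pastEvents E)
    {ε : ℝ} (hε : 0 < ε) : ∃ δ > 0, ∀ m : ℕ,
      (∫⁻ σ, ((A ∩ {σ | σ 1 = some e}).indicator 1 σ : ℝ≥0) ∂Λ ≤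
        ∫⁻ σ, (A.indicator (fun σ => (M.p e (M.orbit j0 xp σ m)).toNNReal) σ : ℝ≥0) ∂Λ +
          (ENNReal.ofReal ε + ENNReal.ofReal a ^ (m + 1) * C / ENNReal.ofReal δ)) ∧
      (∫⁻ σ, (A.indicator (fun σ => (M.p e (M.orbit j0 xp σ m)).toNNReal) σ : ℝ≥0) ∂Λ ≤
        ∫⁻ σ, ((A ∩ {σ | σ 1 = some e}).indicator 1 σ : ℝ≥0) ∂Λ +
          (ENNReal.ofReal ε + ENNReal.ofReal a ^ (m + 1) * C / ENNReal.ofReal δ)) := by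
  obtain ⟨δ, hδ, hp⟩ := M.exists_ofReal_p_le huc e hε
  refine ⟨δ, hδ, fun m => ?_⟩
  obtain ⟨s, hs, hs0, hdep⟩ := id hA
  set r : Set ℤ := insert 1 s ∪ (s ∪ Set.Icc (-(m : ℤ)) 0)
  have hr : r.Finite := (hs.insert 1).union (hs.union (Set.finite_Icc _ _))
  have hr1 : r ⊆ Set.Iic 1 := by
    rintro j ((rfl | hj) | hj | hj)
    · exact Set.mem_Iic.2 le_rfl
    · exact Set.Iic_subset_Iic.2 zero_le_one (hs0 hj)
    · exact Set.Iic_subset_Iic.2 zero_le_one (hs0 hj)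
    · exact hj.2.trans zero_le_one
  have hf := (dependsOn_indicator_letter e hdep).mono
    (Set.subset_union_left : _ ⊆ r)
  have hg := (M.dependsOn_indicator_orbit j0 xp e m hdep).mono
    (Set.subset_union_right : _ ⊆ r)
  have hf1 : ∀ σ, (A ∩ {σ | σ 1 = some e}).indicator (1 : CodeSpace E → ℝ≥0) σ ≤ 1 :=
    fun σ => Set.indicator_le_self' (fun _ _ => zero_le) σ
  have hg1 : ∀ σ, A.indicator (fun σ => (M.p e (M.orbit j0 xp σ m)).toNNReal) σ ≤ 1 :=
    fun σ => Set.indicator_apply_le' (fun _ => Real.toNNReal_le_one.2 (M.p_le_one _ _))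
      fun _ => zero_le
  constructor
  · refine M.lintegral_le_of_dependsOn hΛ hf1 hg1 hr hr1 hf hg (m + 2) fun n hn => ?_
    obtain ⟨n, rfl⟩ := Nat.exists_eq_add_of_le' (show 1 ≤ n by omega)
    rw [M.lintegral_embed_indicator_letter _ e hA,
      M.lintegral_embed_indicator_orbit xp j0 e hA (by omega)]
    exact M.lintegral_p_le hxp j0 ha hcon hC (m + 1) n A fun h hv =>
      hp _ _ (M.mem_idx _) _ (M.approx_mem hxp _ _ _ hv)
  · refine M.lintegral_le_of_dependsOn hΛ hg1 hf1 hr hr1 hg hf (m + 2) fun n hn => ?_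
    obtain ⟨n, rfl⟩ := Nat.exists_eq_add_of_le' (show 1 ≤ n by omega)
    rw [M.lintegral_embed_indicator_letter _ e hA,
      M.lintegral_embed_indicator_orbit xp j0 e hA (by omega)]
    refine M.lintegral_p_le hxp j0 ha hcon hC (m + 1) n A fun h hv => ?_
    rw [dist_comm]
    exact hp _ _ (M.approx_mem hxp _ _ _ hv) _ (M.mem_idx _)

end Conditional

section Asymptotic

variable {K : Type*} [MetricSpace K] [MeasurableSpace K] {N E : Type*}

lemma tendsto_lintegral_indicator_orbit [Countable E] (M : MarkovSystem K N E) (j0 : N) {xp : N → K}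
    (hxp : ∀ j, xp j ∈ M.Kset j) {pbar : E → K → ℝ} (hpbar : M.IsUCExtensionP pbar) (e : E)
    {Λ : Measure (CodeSpace E)} [IsProbabilityMeasure Λ] (hD : ∀ᵐ σ ∂Λ, σ ∈ M.codeDomain j0 xp)
    {A : Set (CodeSpace E)} (hA : A ∈ pastEvents E) :
    Tendsto (fun m => ∫⁻ σ,
        (A.indicator (fun σ => (M.p e (M.orbit j0 xp σ m)).toNNReal) σ : ℝ≥0) ∂Λ) atTop
      (𝓝 (∫⁻ σ in A,
        ENNReal.ofReal ((M.Tset (M.i e)).indicator (fun σ => pbar e (M.code j0 xp σ)) σ) ∂Λ)) := by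
  rw [← lintegral_indicator (measurableSet_of_mem_pastEvents hA)]
  obtain ⟨s, hs, -, hdep⟩ := hA
  refine tendsto_lintegral_of_dominated_convergence 1
    (fun m => (measurable_of_dependsOn (hs.union (Set.finite_Icc _ _))
      (M.dependsOn_indicator_orbit j0 xp e m hdep)).coe_nnreal_ennreal)
    (fun m => Eventually.of_forall fun σ => ?_) (by simp) ?_
  · exact ENNReal.coe_le_coe.2 (Set.indicator_apply_le'
      (fun _ => Real.toNNReal_le_one.2 (M.p_le_one _ _)) fun _ => zero_le)
  · filter_upwards [hD] with σ hσ
    by_cases hA : σ ∈ A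
    · simp only [Set.indicator_of_mem hA]
      exact ENNReal.tendsto_ofReal (M.tendsto_p_orbit j0 hxp hpbar e hσ)
    · simp [Set.indicator_of_notMem hA]

lemma lintegral_indicator_letter (Λ : Measure (CodeSpace E)) (e : E) {A : Set (CodeSpace E)}
    (hA : MeasurableSet A) :
    ∫⁻ σ, ((A ∩ {σ | σ 1 = some e}).indicator 1 σ : ℝ≥0) ∂Λ =
      ∫⁻ σ in A, {σ : CodeSpace E | σ 1 = some e}.indicator 1 σ ∂Λ := by
  rw [← lintegral_indicator hA, Set.indicator_indicator]
  refine lintegral_congr fun σ => ?_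
  simp only [Set.indicator, Set.mem_inter_iff, Set.mem_ofPred_eq]
  split_ifs <;> simp

lemma setLIntegral_letter_eq [Countable E] (M : MarkovSystem K N E) {xp : N → K}
    (hxp : ∀ j, xp j ∈ M.Kset j) (j0 : N) {a : ℝ} (ha : 0 ≤ a) (ha1 : a < 1)
    (hcon : M.IsContractive a) (huc : M.IsUniformlyContinuous) {C : ℝ≥0∞} (hCtop : C ≠ ⊤)
    (hC : ENNReal.ofReal a * C + M.bConst xp ≤ C) {pbar : E → K → ℝ}
    (hpbar : M.IsUCExtensionP pbar) {Λ : Measure (CodeSpace E)} [IsProbabilityMeasure Λ]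
    (hΛ : M.IsAvgLimit (xp j0) Λ) (hD : ∀ᵐ σ ∂Λ, σ ∈ M.codeDomain j0 xp) (e : E)
    {A : Set (CodeSpace E)} (hA : A ∈ pastEvents E) :
    ∫⁻ σ in A, {σ : CodeSpace E | σ 1 = some e}.indicator 1 σ ∂Λ = ∫⁻ σ in A,
      ENNReal.ofReal ((M.Tset (M.i e)).indicator (fun σ => pbar e (M.code j0 xp σ)) σ) ∂Λ := by
  have hlim := M.tendsto_lintegral_indicator_orbit j0 hxp hpbar e hD hA
  have herr : ∀ ε δ : ℝ, 0 < δ → Tendsto (fun m : ℕ =>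
      ENNReal.ofReal ε + ENNReal.ofReal a ^ (m + 1) * C / ENNReal.ofReal δ) atTop
        (𝓝 (ENNReal.ofReal ε)) := by
    intro ε δ hδ
    have h1 : Tendsto (fun m : ℕ => ENNReal.ofReal a ^ (m + 1)) atTop (𝓝 0) :=
      (ENNReal.tendsto_pow_atTop_nhds_zero_of_lt_one (by simpa using ha1)).comp
        (tendsto_add_atTop_nat 1)
    have h2 := ENNReal.Tendsto.div_const (ENNReal.Tendsto.mul_const h1 (Or.inr hCtop))
      (Or.inr (ENNReal.ofReal_pos.2 hδ).ne')
    rw [zero_mul, ENNReal.zero_div] at h2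
    simpa using h2.const_add (ENNReal.ofReal ε)
  rw [← lintegral_indicator_letter Λ e (measurableSet_of_mem_pastEvents hA)]
  refine le_antisymm ?_ ?_ <;> refine ENNReal.le_of_forall_pos_le_add fun ε hε _ => ?_ <;>
    obtain ⟨δ, hδ, h⟩ := M.lintegral_letter_orbit_le hxp j0 ha hcon huc hC hΛ e hA
      (NNReal.coe_pos.2 hε) <;>
    have herr := herr ε δ hδ <;> rw [ENNReal.ofReal_coe_nnreal] at herr h
  · exact ge_of_tendsto' (hlim.add herr) fun m => (h m).1
  · exact le_of_tendsto_of_tendsto' hlim (herr.const_add _) fun m => (h m).2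

lemma aestronglyMeasurable_past [Countable E] (M : MarkovSystem K N E) (j0 : N) {xp : N → K}
    (hxp : ∀ j, xp j ∈ M.Kset j) {pbar : E → K → ℝ} (hpbar : M.IsUCExtensionP pbar) (e : E)
    {Λ : Measure (CodeSpace E)} (hD : ∀ᵐ σ ∂Λ, σ ∈ M.codeDomain j0 xp) :
    AEStronglyMeasurable[pastAlgebra E]
      ((M.Tset (M.i e)).indicator fun σ => pbar e (M.code j0 xp σ)) Λ := by
  have hmeas : ∀ m, Measurable[pastAlgebra E] fun σ => M.p e (M.orbit j0 xp σ m) := fun m =>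
    measurable_past_of_dependsOn (Set.finite_Icc (-(m : ℤ)) 0) (fun j hj => hj.2) fun σ τ h =>
      congrArg (M.p e) (M.dependsOn_orbit j0 xp m h)
  refine ⟨fun σ => limsup (fun m => M.p e (M.orbit j0 xp σ m)) atTop,
    (@Measurable.limsup _ _ _ _ _ (pastAlgebra E) _ _ _ _ hmeas).stronglyMeasurable, ?_⟩
  filter_upwards [hD] with σ hσ
  exact (M.tendsto_p_orbit j0 hxp hpbar e hσ).limsup_eq.symm

/-- The averaged laws have a limit point that is an asymptotic state. -/
theorem exists_isAsymptotic [CompleteSpace K] [Countable N] [Countable E]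
    (M : MarkovSystem K N E) (j0 : N) {xp : N → K} (hxp : ∀ j, xp j ∈ M.Kset j)
    {pbar : E → K → ℝ} (hpbar : M.IsUCExtensionP pbar) {a : ℝ} (ha : 0 ≤ a) (ha1 : a < 1) (hcon : M.IsContractive a)
    (huc : M.IsUniformlyContinuous) (hb : M.bConst xp ≠ ⊤)
    (hdom : M.HasDominatingChain) (hc : M.cConst ≠ ⊤) :
    ∃ Λ, M.IsAsymptotic j0 xp pbar Λ := by
  obtain ⟨C, hCtop, hC⟩ : ∃ C : ℝ≥0∞, C ≠ ⊤ ∧ ENNReal.ofReal a * C + M.bConst xp ≤ C := by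
    refine ⟨ENNReal.ofReal ((M.bConst xp).toReal / (1 - a)), ENNReal.ofReal_ne_top, ?_⟩
    have h1 : 0 < 1 - a := sub_pos.2 ha1
    rw [← ENNReal.ofReal_mul ha]
    nth_rewrite 2 [← ENNReal.ofReal_toReal hb]
    rw [← ENNReal.ofReal_add (by positivity) ENNReal.toReal_nonneg]
    refine ENNReal.ofReal_le_ofReal (le_of_eq ?_)
    field_simp
    ring
  obtain ⟨Λ, hprob, hΛ⟩ := M.exists_limit_avgLaw hdom hc (xp j0)
  have hD := M.ae_mem_codeDomain hxp j0 ha ha1 hcon hCtop hC hΛ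
  refine ⟨Λ, hprob, M.map_shift_of_isAvgLimit hΛ, ?_, fun e => ?_⟩
  · exact (measure_congr (eventuallyEq_univ.2 hD)).trans measure_univ
  have hletter : MeasurableSet {σ : CodeSpace E | σ 1 = some e} :=
    (measurable_pi_apply (1 : ℤ) : Measurable fun σ : CodeSpace E => σ 1)
      (MeasurableSet.singleton (some e))
  set G := (M.Tset (M.i e)).indicator fun σ => pbar e (M.code j0 xp σ) with hG
  have hG0 : 0 ≤ᵐ[Λ] G := by
    filter_upwards [hD] with σ hσ
    exact ge_of_tendsto' (M.tendsto_p_orbit j0 hxp hpbar e hσ) fun m => M.p_nonneg _ _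
  have hG1 : ∀ᵐ σ ∂Λ, ‖G σ‖ ≤ 1 := by
    filter_upwards [hD, hG0] with σ hσ h0
    rw [Real.norm_of_nonneg h0]
    exact le_of_tendsto' (M.tendsto_p_orbit j0 hxp hpbar e hσ) fun m => M.p_le_one _ _
  have hGpast := M.aestronglyMeasurable_past j0 hxp hpbar e hD
  have hGm : AEStronglyMeasurable G Λ := hGpast.mono pastAlgebra_le
  have hGint : Integrable G Λ := Integrable.of_bound hGm 1 hG1
  refine (ae_eq_condExp_of_forall_setIntegral_eq pastAlgebra_le
    ((integrable_const (1 : ℝ)).indicator hletter) (fun _ _ _ => hGint.integrableOn)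
    (fun A hA _ => ?_) hGpast).symm
  rw [integral_eq_lintegral_of_nonneg_ae (ae_restrict_of_ae hG0) hGm.restrict,
    integral_eq_lintegral_of_nonneg_ae
      (Eventually.of_forall fun σ => Set.indicator_nonneg (fun _ _ => zero_le_one) σ)
      ((measurable_const.indicator hletter).aestronglyMeasurable)]
  congr 1
  rw [← setLIntegral_eq_of_pastEvents (f := {σ : CodeSpace E | σ 1 = some e}.indicator 1) ?_
    (fun B hB => M.setLIntegral_letter_eq hxp j0 ha ha1 hcon huc hCtop hC hpbar hΛ hD e hB) hA]
  · refine lintegral_congr fun σ => ?_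
    by_cases h : σ 1 = some e <;> simp [h]
  · rw [lintegral_indicator_one hletter]
    exact measure_ne_top _ _

end Asymptotic

end MarkovSystem

end


variable {K : Type*} [MetricSpace K] [CompleteSpace K] [MeasurableSpace K] [BorelSpace K]
  {N E : Type*} [Countable N] [Countable E]

/-- If `M` is consistent, contractive with rate `0 < a < 1`, uniformly
continuous with `b < ∞`, and has a dominating Markov chain with `c < ∞`, then `P(M)` is
nonempty: `M` possesses an invariant Borel probability measure. -/
theorem invariant_probability_measure_exists
    (M : MarkovSystem K N E) (j0 : N) (xp : N → K) (hxp : ∀ j, xp j ∈ M.Kset j)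
    (pbar : E → K → ℝ) (hpbar : M.IsUCExtensionP pbar)
    (hcons : M.IsConsistent j0 xp pbar)
    (a : ℝ) (ha0 : 0 < a) (ha1 : a < 1) (hcon : M.IsContractive a)
    (huc : M.IsUniformlyContinuous) (hb : M.bConst xp ≠ ⊤)
    (hdom : M.HasDominatingChain) (hc : M.cConst ≠ ⊤) :
    ∃ μ : Measure K, M.IsInvariantMeasure μ := by
  obtain ⟨Λ, hΛ⟩ :=
    M.exists_isAsymptotic j0 hxp hpbar ha0.le ha1 hcon huc hb hdom hc
  exact ⟨_, hcons Λ hΛ⟩
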